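/- arXiv:math/0205140 — 3 statements merged into one kernel-verified Lean document; each statement's English description precedes it below -/
import Mathlib

section
/- Let d ≥ 3 and let M(N) be the expected minimum bipartite matching length in the Poissonized model on [0,1]^d with intensity N. Then for every integer m ≥ 1 and every N > 0, M(m^d N) / (m^d N)^{1−1/d} ≤ M(N)/N^{1−1/d} + C_d / N^{1/2 − 1/d}, where C_d = 2^d √(2d) Σ_{k=0}^{∞} 2^{−k(d/2−1)} is a finite constant depending only on d. -/
open MeasureTheory ProbabilityTheory Filter

noncomputable section

/-- The unit cube `[0,1]^d` in Euclidean space `ℝ^d`. -/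
def unitCube (d : ℕ) : Set (EuclideanSpace ℝ (Fin d)) :=
  {x | ∀ i, x i ∈ Set.Icc (0 : ℝ) 1}

/-- The uniform probability measure on the unit cube `[0,1]^d`
(the cube has Lebesgue measure one, so the restriction of Lebesgue measure
to the cube is the uniform probability measure on it). -/
def unifCube (d : ℕ) : Measure (EuclideanSpace ℝ (Fin d)) :=
  volume.restrict (unitCube d)

/-- `LMBMon X Y A B` is the minimum total Euclidean length of a partial bipartite
matching pairing `min A.card B.card` of the points `X j, j ∈ A` with as many of the
points `Y j, j ∈ B`, each pair consisting of one `X`-point and one `Y`-point. -/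
def LMBMon {d N₁ N₂ : ℕ} (X : Fin N₁ → EuclideanSpace ℝ (Fin d))
    (Y : Fin N₂ → EuclideanSpace ℝ (Fin d)) (A : Finset (Fin N₁)) (B : Finset (Fin N₂)) : ℝ :=
  sInf { s | ∃ (σ : Fin (min A.card B.card) ↪ Fin N₁) (τ : Fin (min A.card B.card) ↪ Fin N₂),
    (∀ i, σ i ∈ A) ∧ (∀ i, τ i ∈ B) ∧ s = ∑ i, dist (X (σ i)) (Y (τ i)) }

/-- `LMBM X Y` : the minimum total Euclidean length of a bipartite matching between the
points of `X` and the points of `Y`; if the two families have different cardinalities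
`N₁ ≠ N₂`, it is the minimum length of a partial matching pairing `min N₁ N₂` points of
each family, leaving `|N₁ - N₂|` points unmatched. -/
def LMBM {d N₁ N₂ : ℕ} (X : Fin N₁ → EuclideanSpace ℝ (Fin d))
    (Y : Fin N₂ → EuclideanSpace ℝ (Fin d)) : ℝ :=
  LMBMon X Y Finset.univ Finset.univ

/-- `MP d lam`: the expected length of a minimum bipartite matching in the Poissonized
model on `[0,1]^d` with intensity `lam`: the numbers `n₁, n₂` of points of the two
families are independent Poisson(lam) variables and the points are i.i.d. uniform
on the cube. -/
def MP (d : ℕ) (lam : ℝ) : ℝ :=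
  ∑' n₁ : ℕ, ∑' n₂ : ℕ,
    (Real.exp (-lam) * lam ^ n₁ / n₁.factorial) *
      ((Real.exp (-lam) * lam ^ n₂ / n₂.factorial) *
        ∫ p : (Fin n₁ → EuclideanSpace ℝ (Fin d)) × (Fin n₂ → EuclideanSpace ℝ (Fin d)),
          LMBM p.1 p.2 ∂ ((Measure.pi fun _ => unifCube d).prod (Measure.pi fun _ => unifCube d)))

end

open scoped ENNReal

def IsM {α β : Type*} (A : Finset α) (B : Finset β) (M : Finset (α × β)) : Prop :=
  (∀ p ∈ M, p.1 ∈ A ∧ p.2 ∈ B) ∧ Set.InjOn Prod.fst (M : Set (α × β)) ∧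
    Set.InjOn Prod.snd (M : Set (α × β))

lemma LMBMon_nonneg {d N₁ N₂ : ℕ} (X : Fin N₁ → EuclideanSpace ℝ (Fin d))
    (Y : Fin N₂ → EuclideanSpace ℝ (Fin d)) (A : Finset (Fin N₁)) (B : Finset (Fin N₂)) :
    0 ≤ LMBMon X Y A B := by
  apply Real.sInf_nonneg
  rintro s ⟨σ, τ, -, -, rfl⟩
  exact Finset.sum_nonneg fun i _ => dist_nonneg

lemma LMBMon_le {d N₁ N₂ : ℕ} (X : Fin N₁ → EuclideanSpace ℝ (Fin d))
    (Y : Fin N₂ → EuclideanSpace ℝ (Fin d)) (A : Finset (Fin N₁)) (B : Finset (Fin N₂))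
    (M : Finset (Fin N₁ × Fin N₂)) (hM : IsM A B M) (hc : M.card = min A.card B.card) :
    LMBMon X Y A B ≤ ∑ p ∈ M, dist (X p.1) (Y p.2) := by
  apply csInf_le
  · refine ⟨0, ?_⟩
    rintro s ⟨σ, τ, -, -, rfl⟩
    exact Finset.sum_nonneg fun i _ => dist_nonneg
  · let e := (Finset.equivFinOfCardEq hc).symm
    refine ⟨⟨fun i => (e i).1.1, fun i j h => ?_⟩, ⟨fun i => (e i).1.2, fun i j h => ?_⟩,
      fun i => (hM.1 _ (e i).2).1, fun i => (hM.1 _ (e i).2).2, ?_⟩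
    · exact e.injective (Subtype.ext (hM.2.1 (e i).2 (e j).2 h))
    · exact e.injective (Subtype.ext (hM.2.2 (e i).2 (e j).2 h))
    · rw [← Finset.sum_coe_sort M, ← e.sum_comp]
      rfl

lemma exists_LMBMon {d N₁ N₂ : ℕ} (X : Fin N₁ → EuclideanSpace ℝ (Fin d))
    (Y : Fin N₂ → EuclideanSpace ℝ (Fin d)) (A : Finset (Fin N₁)) (B : Finset (Fin N₂)) :
    ∃ M, IsM A B M ∧ M.card = min A.card B.card ∧
      ∑ p ∈ M, dist (X p.1) (Y p.2) = LMBMon X Y A B := by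
  classical
  have hmem : LMBMon X Y A B ∈ { s | ∃ (σ : Fin (min A.card B.card) ↪ Fin N₁)
      (τ : Fin (min A.card B.card) ↪ Fin N₂),
    (∀ i, σ i ∈ A) ∧ (∀ i, τ i ∈ B) ∧ s = ∑ i, dist (X (σ i)) (Y (τ i)) } := by
    apply Set.Nonempty.csInf_mem
    · refine ⟨_, (Fin.castLEEmb (min_le_left _ _)).trans (A.orderEmbOfFin rfl).toEmbedding,
        (Fin.castLEEmb (min_le_right _ _)).trans (B.orderEmbOfFin rfl).toEmbedding, ?_, ?_, rfl⟩
      · intro i; exact Finset.orderEmbOfFin_mem A rfl _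
      · intro i; exact Finset.orderEmbOfFin_mem B rfl _
    · refine Set.Finite.subset (Set.finite_range (fun q : (Fin (min A.card B.card) ↪ Fin N₁) ×
        (Fin (min A.card B.card) ↪ Fin N₂) => ∑ i, dist (X (q.1 i)) (Y (q.2 i)))) ?_
      rintro s ⟨σ, τ, -, -, rfl⟩
      exact ⟨(σ, τ), rfl⟩
  obtain ⟨σ, τ, h1, h2, h3⟩ := hmem
  have hinj : Function.Injective (fun i => (σ i, τ i)) := fun i j h =>
    σ.injective (Prod.ext_iff.1 h).1
  refine ⟨Finset.univ.image (fun i => (σ i, τ i)), ⟨?_, ?_, ?_⟩, ?_, ?_⟩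
  · intro p hp
    obtain ⟨i, -, rfl⟩ := Finset.mem_image.1 hp
    exact ⟨h1 i, h2 i⟩
  · intro p hp q hq h
    obtain ⟨i, -, rfl⟩ := Finset.mem_image.1 (Finset.mem_coe.1 hp)
    obtain ⟨j, -, rfl⟩ := Finset.mem_image.1 (Finset.mem_coe.1 hq)
    have : i = j := σ.injective h
    rw [this]
  · intro p hp q hq h
    obtain ⟨i, -, rfl⟩ := Finset.mem_image.1 (Finset.mem_coe.1 hp)
    obtain ⟨j, -, rfl⟩ := Finset.mem_image.1 (Finset.mem_coe.1 hq)
    have : i = j := τ.injective h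
    rw [this]
  · rw [Finset.card_image_of_injective _ hinj]; simp
  · rw [Finset.sum_image (fun a _ b _ h => hinj h), h3]

lemma IsM.extend {α β : Type*} [DecidableEq α] [DecidableEq β] {A : Finset α} {B : Finset β}
    (c : α → β → ℝ) (D : ℝ) (hD : ∀ a ∈ A, ∀ b ∈ B, c a b ≤ D) (r : ℕ) :
    ∀ (M : Finset (α × β)), IsM A B M → M.card + r ≤ min A.card B.card →
    ∃ M', IsM A B M' ∧ M'.card = M.card + r ∧
      ∑ p ∈ M', c p.1 p.2 ≤ ∑ p ∈ M, c p.1 p.2 + r * D := by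
  induction r with
  | zero => intro M hM _; exact ⟨M, hM, by simp, by simp⟩
  | succ r ih =>
    intro M hM hc
    have h1 : (M.image Prod.fst).card < A.card := by
      refine lt_of_le_of_lt Finset.card_image_le ?_
      have := min_le_left A.card B.card; omega
    have h2 : (M.image Prod.snd).card < B.card := by
      refine lt_of_le_of_lt Finset.card_image_le ?_
      have := min_le_right A.card B.card; omega
    obtain ⟨a, ha, ha'⟩ := Finset.exists_mem_notMem_of_card_lt_card h1
    obtain ⟨b, hb, hb'⟩ := Finset.exists_mem_notMem_of_card_lt_card h2
    have hn : (a, b) ∉ M := fun h => ha' (Finset.mem_image_of_mem Prod.fst h)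
    have hM1 : IsM A B (insert (a, b) M) := by
      refine ⟨?_, ?_, ?_⟩
      · intro p hp
        rcases Finset.mem_insert.1 hp with rfl | hp
        · exact ⟨ha, hb⟩
        · exact hM.1 p hp
      · rw [Finset.coe_insert, Set.injOn_insert (by exact_mod_cast hn)]
        refine ⟨hM.2.1, ?_⟩
        rintro ⟨q, hq, hq'⟩
        exact ha' (Finset.mem_image.2 ⟨q, hq, hq'⟩)
      · rw [Finset.coe_insert, Set.injOn_insert (by exact_mod_cast hn)]
        refine ⟨hM.2.2, ?_⟩
        rintro ⟨q, hq, hq'⟩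
        exact hb' (Finset.mem_image.2 ⟨q, hq, hq'⟩)
    have hcard := Finset.card_insert_of_notMem hn
    obtain ⟨M', h3, h4, h5⟩ := ih _ hM1 (by omega)
    refine ⟨M', h3, by omega, h5.trans ?_⟩
    rw [Finset.sum_insert hn]
    have := hD a ha b hb
    push_cast
    linarith

lemma LMBMon_merge {d N₁ N₂ : ℕ} {ι : Type*} [DecidableEq ι]
    (X : Fin N₁ → EuclideanSpace ℝ (Fin d))
    (Y : Fin N₂ → EuclideanSpace ℝ (Fin d)) (A : Finset (Fin N₁)) (B : Finset (Fin N₂))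
    (t : Finset ι) (f : Fin N₁ → ι) (g : Fin N₂ → ι) (hf : ∀ a ∈ A, f a ∈ t)
    (hg : ∀ b ∈ B, g b ∈ t) (D : ℝ) (hD0 : 0 ≤ D)
    (hD : ∀ a ∈ A, ∀ b ∈ B, dist (X a) (Y b) ≤ 2 * D) :
    LMBMon X Y A B ≤ ∑ i ∈ t, (LMBMon X Y (A.filter (f · = i)) (B.filter (g · = i))
      + D * |((A.filter (f · = i)).card : ℝ) - ((B.filter (g · = i)).card : ℝ)|) := by
  choose M hM1 hM2 hM3 using fun i => exists_LMBMon X Y (A.filter (f · = i)) (B.filter (g · = i))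
  have hfi : ∀ i, ∀ p ∈ M i, f p.1 = i := fun i p hp => (Finset.mem_filter.1 ((hM1 i).1 p hp).1).2
  have hgi : ∀ i, ∀ p ∈ M i, g p.2 = i := fun i p hp => (Finset.mem_filter.1 ((hM1 i).1 p hp).2).2
  have hdisj : ∀ i ∈ t, ∀ j ∈ t, i ≠ j → Disjoint (M i) (M j) := by
    intro i _ j _ hij
    rw [Finset.disjoint_left]
    intro p hp hq
    exact hij ((hfi i p hp).symm.trans (hfi j p hq))
  have hU : IsM A B (t.biUnion M) := by
    refine ⟨?_, ?_, ?_⟩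
    · intro p hp
      obtain ⟨i, _, hp⟩ := Finset.mem_biUnion.1 hp
      exact ⟨(Finset.mem_filter.1 ((hM1 i).1 p hp).1).1, (Finset.mem_filter.1 ((hM1 i).1 p hp).2).1⟩
    · intro p hp q hq h
      obtain ⟨i, _, hp⟩ := Finset.mem_biUnion.1 (Finset.mem_coe.1 hp)
      obtain ⟨j, _, hq⟩ := Finset.mem_biUnion.1 (Finset.mem_coe.1 hq)
      have hij : i = j := by rw [← hfi i p hp, ← hfi j q hq, h]
      subst hij
      exact (hM1 i).2.1 hp hq h
    · intro p hp q hq h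
      obtain ⟨i, _, hp⟩ := Finset.mem_biUnion.1 (Finset.mem_coe.1 hp)
      obtain ⟨j, _, hq⟩ := Finset.mem_biUnion.1 (Finset.mem_coe.1 hq)
      have hij : i = j := by rw [← hgi i p hp, ← hgi j q hq, h]
      subst hij
      exact (hM1 i).2.2 hp hq h
  have hUc : (t.biUnion M).card = ∑ i ∈ t, (M i).card := Finset.card_biUnion hdisj
  have hA : A.card = ∑ i ∈ t, (A.filter (f · = i)).card := Finset.card_eq_sum_card_fiberwise hf
  have hB : B.card = ∑ i ∈ t, (B.filter (g · = i)).card := Finset.card_eq_sum_card_fiberwise hg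
  have hle : (t.biUnion M).card ≤ min A.card B.card := by
    rw [hUc, hA, hB]
    refine le_min (Finset.sum_le_sum fun i _ => ?_) (Finset.sum_le_sum fun i _ => ?_)
    · rw [hM2]; exact min_le_left _ _
    · rw [hM2]; exact min_le_right _ _
  obtain ⟨r, hr⟩ := Nat.exists_eq_add_of_le hle
  obtain ⟨M', h1, h2, h3⟩ :=
    IsM.extend (fun a b => dist (X a) (Y b)) (2 * D) hD r _ hU hr.ge
  refine (LMBMon_le X Y A B M' h1 (h2.trans hr.symm)).trans (h3.trans ?_)
  rw [Finset.sum_biUnion hdisj, Finset.sum_add_distrib, ← Finset.mul_sum]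
  simp only [hM3]
  have key : 2 * (r : ℝ) ≤ ∑ i ∈ t, |((A.filter (f · = i)).card : ℝ) - ((B.filter (g · = i)).card : ℝ)| := by
    have e1 : ∀ i, |((A.filter (f · = i)).card : ℝ) - ((B.filter (g · = i)).card : ℝ)|
        = ((A.filter (f · = i)).card : ℝ) + ((B.filter (g · = i)).card : ℝ) - 2 * ((M i).card : ℝ) := by
      intro i
      rw [hM2]
      push_cast
      rcases le_total ((A.filter (f · = i)).card : ℝ) ((B.filter (g · = i)).card : ℝ) with h | h
      · rw [min_eq_left h, abs_of_nonpos (by linarith)]; ring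
      · rw [min_eq_right h, abs_of_nonneg (by linarith)]; ring
    simp only [e1]
    rw [Finset.sum_sub_distrib, Finset.sum_add_distrib, ← Finset.mul_sum]
    have a1 : (A.card : ℝ) = ∑ i ∈ t, ((A.filter (f · = i)).card : ℝ) := by exact_mod_cast hA
    have a2 : (B.card : ℝ) = ∑ i ∈ t, ((B.filter (g · = i)).card : ℝ) := by exact_mod_cast hB
    have a3 : ((t.biUnion M).card : ℝ) = ∑ i ∈ t, ((M i).card : ℝ) := by exact_mod_cast hUc
    rw [← a1, ← a2, ← a3]
    have a4 : ((t.biUnion M).card : ℝ) + r ≤ A.card := by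
      have := min_le_left A.card B.card; exact_mod_cast (by omega)
    have a5 : ((t.biUnion M).card : ℝ) + r ≤ B.card := by
      have := min_le_right A.card B.card; exact_mod_cast (by omega)
    linarith
  nlinarith [mul_le_mul_of_nonneg_left key hD0]

/-- restriction of a configuration to a set of indices -/
def rs {E : Type*} {n : ℕ} (S : Finset (Fin n)) (x : Fin n → E) : Fin S.card → E :=
  fun i => x (S.orderEmbOfFin rfl i)

lemma LMBMon_le_LMBM_rs {d N₁ N₂ : ℕ} (X : Fin N₁ → EuclideanSpace ℝ (Fin d))
    (Y : Fin N₂ → EuclideanSpace ℝ (Fin d)) (A : Finset (Fin N₁)) (B : Finset (Fin N₂)) :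
    LMBMon X Y A B ≤ LMBM (rs A X) (rs B Y) := by
  classical
  obtain ⟨M, h1, h2, h3⟩ := exists_LMBMon (rs A X) (rs B Y) Finset.univ Finset.univ
  unfold LMBM
  rw [← h3]
  have hinj : Function.Injective (Prod.map (A.orderEmbOfFin rfl) (B.orderEmbOfFin rfl)) :=
    Function.Injective.prodMap (A.orderEmbOfFin rfl).injective (B.orderEmbOfFin rfl).injective
  refine (LMBMon_le X Y A B (M.image (Prod.map (A.orderEmbOfFin rfl) (B.orderEmbOfFin rfl)))
    ⟨?_, ?_, ?_⟩ ?_).trans ?_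
  · intro p hp
    obtain ⟨q, -, rfl⟩ := Finset.mem_image.1 hp
    exact ⟨Finset.orderEmbOfFin_mem A rfl _, Finset.orderEmbOfFin_mem B rfl _⟩
  · intro p hp q hq h
    obtain ⟨p, hp', rfl⟩ := Finset.mem_image.1 (Finset.mem_coe.1 hp)
    obtain ⟨q, hq', rfl⟩ := Finset.mem_image.1 (Finset.mem_coe.1 hq)
    rw [h1.2.1 hp' hq' ((A.orderEmbOfFin rfl).injective h)]
  · intro p hp q hq h
    obtain ⟨p, hp', rfl⟩ := Finset.mem_image.1 (Finset.mem_coe.1 hp)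
    obtain ⟨q, hq', rfl⟩ := Finset.mem_image.1 (Finset.mem_coe.1 hq)
    rw [h1.2.2 hp' hq' ((B.orderEmbOfFin rfl).injective h)]
  · rw [Finset.card_image_of_injective _ hinj, h2]; simp
  · rw [Finset.sum_image (fun a _ b _ h => hinj h)]
    rfl

lemma LMBM_scale {d N₁ N₂ : ℕ} (X X' : Fin N₁ → EuclideanSpace ℝ (Fin d))
    (Y Y' : Fin N₂ → EuclideanSpace ℝ (Fin d)) (c : ℝ)
    (h : ∀ i j, dist (X' i) (Y' j) = c * dist (X i) (Y j)) :
    LMBM X' Y' ≤ c * LMBM X Y := by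
  obtain ⟨M, h1, h2, h3⟩ := exists_LMBMon X Y Finset.univ Finset.univ
  unfold LMBM
  rw [← h3, Finset.mul_sum]
  refine (LMBMon_le X' Y' _ _ M h1 h2).trans (le_of_eq ?_)
  exact Finset.sum_congr rfl fun p _ => h _ _

lemma LMBM_le_bound {d N₁ N₂ : ℕ} (X : Fin N₁ → EuclideanSpace ℝ (Fin d))
    (Y : Fin N₂ → EuclideanSpace ℝ (Fin d)) (D : ℝ) (hD : ∀ i j, dist (X i) (Y j) ≤ D)
    (hD0 : 0 ≤ D) : LMBM X Y ≤ N₁ * D := by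
  obtain ⟨M, h1, h2, h3⟩ := exists_LMBMon X Y Finset.univ Finset.univ
  unfold LMBM
  rw [← h3]
  refine (Finset.sum_le_card_nsmul M _ D (fun p _ => hD _ _)).trans ?_
  rw [nsmul_eq_mul]
  gcongr
  rw [h2]; simp

lemma LMBM_empty {d N₁ N₂ : ℕ} (X : Fin N₁ → EuclideanSpace ℝ (Fin d))
    (Y : Fin N₂ → EuclideanSpace ℝ (Fin d)) (A : Finset (Fin N₁)) (B : Finset (Fin N₂))
    (hA : A = ∅) : LMBMon X Y A B = 0 := by
  obtain ⟨M, h1, h2, h3⟩ := exists_LMBMon X Y A B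
  rw [← h3]
  have : M.card = 0 := by rw [h2, hA]; simp
  rw [Finset.card_eq_zero.1 this]; simp

lemma measurable_LMBM {d N₁ N₂ : ℕ} :
    Measurable (fun p : (Fin N₁ → EuclideanSpace ℝ (Fin d)) × (Fin N₂ → EuclideanSpace ℝ (Fin d)) =>
      LMBM p.1 p.2) := by
  classical
  let Q := {M : Finset (Fin N₁ × Fin N₂) // IsM Finset.univ Finset.univ M ∧
    M.card = min (Finset.univ : Finset (Fin N₁)).card (Finset.univ : Finset (Fin N₂)).card}
  have : (fun p : (Fin N₁ → EuclideanSpace ℝ (Fin d)) × (Fin N₂ → EuclideanSpace ℝ (Fin d)) =>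
      LMBM p.1 p.2) = fun p => ⨅ M : Q, ∑ q ∈ M.1, dist (p.1 q.1) (p.2 q.2) := by
    funext p
    obtain ⟨M, h1, h2, h3⟩ := exists_LMBMon p.1 p.2 Finset.univ Finset.univ
    have : Nonempty Q := ⟨⟨M, h1, h2⟩⟩
    apply le_antisymm
    · exact le_ciInf fun M => LMBMon_le _ _ _ _ _ M.2.1 M.2.2
    · unfold LMBM
      rw [← h3]
      exact ciInf_le (Finite.bddBelow_range _) (⟨M, h1, h2⟩ : Q)
  rw [this]
  refine Measurable.iInf fun M => ?_
  fun_prop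

noncomputable def idx {d : ℕ} (m j : ℕ) (x : EuclideanSpace ℝ (Fin d)) : Fin d → ℕ :=
  fun i => ⌊(m : ℝ) * x i⌋₊ / 2 ^ j

def cell (d m j : ℕ) (b : Fin d → ℕ) : Set (EuclideanSpace ℝ (Fin d)) :=
  {x | ∀ i, x i ∈ Set.Ico ((b i : ℝ) * (2 ^ j / m)) (((b i : ℝ) + 1) * (2 ^ j / m))}

def hcube (d : ℕ) : Set (EuclideanSpace ℝ (Fin d)) := {x | ∀ i, x i ∈ Set.Ico (0 : ℝ) 1}

def bx (d m j : ℕ) : Finset (Fin d → ℕ) :=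
  Fintype.piFinset (fun _ => Finset.range ((m - 1) / 2 ^ j + 1))

lemma mem_cell_iff {d m j : ℕ} (hm : 1 ≤ m) (b : Fin d → ℕ) (x : EuclideanSpace ℝ (Fin d))
    (hx : ∀ i, 0 ≤ x i) : x ∈ cell d m j b ↔ idx m j x = b := by
  have hm' : (0 : ℝ) < m := by exact_mod_cast hm
  rw [funext_iff]
  refine forall_congr' fun i => ?_
  have h2 : 0 < 2 ^ j := by positivity
  have e1 : idx m j x i = b i ↔ b i * 2 ^ j ≤ ⌊(m : ℝ) * x i⌋₊ ∧ ⌊(m : ℝ) * x i⌋₊ < (b i + 1) * 2 ^ j := by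
    unfold idx
    rw [← Nat.le_div_iff_mul_le h2, ← Nat.div_lt_iff_lt_mul h2]
    omega
  have h0 : 0 ≤ (m : ℝ) * x i := mul_nonneg hm'.le (hx i)
  rw [e1, Nat.le_floor_iff h0, Nat.floor_lt h0, Set.mem_Ico, ← mul_div_assoc, ← mul_div_assoc,
    div_le_iff₀ hm', lt_div_iff₀ hm']
  push_cast
  rw [mul_comm (x i)]

lemma idx_succ {d m j : ℕ} (x : EuclideanSpace ℝ (Fin d)) :
    idx m (j + 1) x = fun i => idx m j x i / 2 := by
  funext i
  unfold idx
  rw [Nat.div_div_eq_div_mul, pow_succ]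

lemma idx_mem_bx {d m j : ℕ} (hm : 1 ≤ m) (x : EuclideanSpace ℝ (Fin d)) (hx : x ∈ hcube d) :
    idx m j x ∈ bx d m j := by
  have hm' : (0 : ℝ) < m := by exact_mod_cast hm
  refine Fintype.mem_piFinset.2 fun i => Finset.mem_range.2 ?_
  have h : ⌊(m : ℝ) * x i⌋₊ < m := by
    rw [Nat.floor_lt (mul_nonneg hm'.le (hx i).1)]
    nlinarith [(hx i).2]
  have : ⌊(m : ℝ) * x i⌋₊ / 2 ^ j ≤ (m - 1) / 2 ^ j := Nat.div_le_div_right (by omega)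
  unfold idx
  omega

lemma dist_cell {d m j : ℕ} (b : Fin d → ℕ) (x y : EuclideanSpace ℝ (Fin d))
    (hx : x ∈ cell d m j b) (hy : y ∈ cell d m j b) :
    dist x y ≤ Real.sqrt d * (2 ^ j / m) := by
  have hs : (0 : ℝ) ≤ 2 ^ j / m := by positivity
  rw [EuclideanSpace.dist_eq]
  refine Real.sqrt_le_iff.2 ⟨by positivity, ?_⟩
  rw [mul_pow, Real.sq_sqrt (by positivity)]
  calc ∑ i, dist (x i) (y i) ^ 2 ≤ ∑ i : Fin d, (2 ^ j / (m : ℝ)) ^ 2 := by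
        refine Finset.sum_le_sum fun i _ => ?_
        have : dist (x i) (y i) ≤ 2 ^ j / m := by
          rw [Real.dist_eq, abs_le]
          have h1 := hx i
          have h2 := hy i
          rw [Set.mem_Ico] at h1 h2
          constructor <;> linarith
        gcongr
    _ = _ := by simp

noncomputable def VV {d N₁ N₂ : ℕ} (m j : ℕ) (X : Fin N₁ → EuclideanSpace ℝ (Fin d))
    (Y : Fin N₂ → EuclideanSpace ℝ (Fin d)) : ℝ :=
  ∑ b ∈ bx d m j, LMBMon X Y (Finset.univ.filter (fun a => idx m j (X a) = b))
    (Finset.univ.filter (fun a => idx m j (Y a) = b))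

lemma VV_step {d N₁ N₂ : ℕ} (m j : ℕ) (hm : 1 ≤ m) (X : Fin N₁ → EuclideanSpace ℝ (Fin d))
    (Y : Fin N₂ → EuclideanSpace ℝ (Fin d)) (hX : ∀ i, X i ∈ hcube d) (hY : ∀ i, Y i ∈ hcube d) :
    VV m (j + 1) X Y ≤ VV m j X Y + (Real.sqrt d * (2 ^ j / m)) * ∑ b ∈ bx d m j,
      |((Finset.univ.filter (fun a => idx m j (X a) = b)).card : ℝ)
        - ((Finset.univ.filter (fun a => idx m j (Y a) = b)).card : ℝ)| := by
  classical
  unfold VV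
  rw [Finset.mul_sum, ← Finset.sum_add_distrib]
  have hmaps : ∀ b ∈ bx d m j, (fun i => b i / 2) ∈ bx d m (j + 1) := by
    intro b hb
    refine Fintype.mem_piFinset.2 fun i => Finset.mem_range.2 ?_
    have := Finset.mem_range.1 (Fintype.mem_piFinset.1 hb i)
    rw [pow_succ, ← Nat.div_div_eq_div_mul]
    omega
  rw [← Finset.sum_fiberwise_of_maps_to hmaps]
  refine Finset.sum_le_sum fun c _ => ?_
  refine (LMBMon_merge X Y _ _ ((bx d m j).filter (fun b => (fun i => b i / 2) = c))
    (fun a => idx m j (X a)) (fun a => idx m j (Y a)) ?_ ?_ (Real.sqrt d * (2 ^ j / m))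
    (by positivity) ?_).trans (le_of_eq ?_)
  · intro a ha
    refine Finset.mem_filter.2 ⟨idx_mem_bx hm _ (hX a), ?_⟩
    rw [← idx_succ]; exact (Finset.mem_filter.1 ha).2
  · intro a ha
    refine Finset.mem_filter.2 ⟨idx_mem_bx hm _ (hY a), ?_⟩
    rw [← idx_succ]; exact (Finset.mem_filter.1 ha).2
  · intro a ha b hb
    have h1 := (mem_cell_iff hm c (X a) (fun i => (hX a i).1)).2 (Finset.mem_filter.1 ha).2
    have h2 := (mem_cell_iff hm c (Y b) (fun i => (hY b i).1)).2 (Finset.mem_filter.1 hb).2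
    refine (dist_cell c _ _ h1 h2).trans (le_of_eq ?_)
    rw [pow_succ]; ring
  · refine Finset.sum_congr rfl fun b hb => ?_
    have hb' := (Finset.mem_filter.1 hb).2
    have e : ∀ {n : ℕ} (Z : Fin n → EuclideanSpace ℝ (Fin d)),
        (Finset.univ.filter (fun a => idx m (j + 1) (Z a) = c)).filter (fun a => idx m j (Z a) = b)
        = Finset.univ.filter (fun a => idx m j (Z a) = b) := by
      intro n Z
      ext a
      simp only [Finset.mem_filter, Finset.mem_univ, true_and, idx_succ]
      constructor
      · exact fun h => h.2
      · intro h; refine ⟨?_, h⟩; rw [h]; exact hb'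
    rw [e, e]

lemma LMBM_le_levels {d N₁ N₂ : ℕ} (m : ℕ) (hm : 1 ≤ m) (X : Fin N₁ → EuclideanSpace ℝ (Fin d))
    (Y : Fin N₂ → EuclideanSpace ℝ (Fin d)) (hX : ∀ i, X i ∈ hcube d) (hY : ∀ i, Y i ∈ hcube d)
    (J : ℕ) (hJ : m ≤ 2 ^ J) :
    LMBM X Y ≤ VV m 0 X Y + ∑ j ∈ Finset.range J, (Real.sqrt d * (2 ^ j / m)) * ∑ b ∈ bx d m j,
      |((Finset.univ.filter (fun a => idx m j (X a) = b)).card : ℝ)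
        - ((Finset.univ.filter (fun a => idx m j (Y a) = b)).card : ℝ)| := by
  have h1 : LMBM X Y = VV m J X Y := by
    have hb : bx d m J = {0} := by
      have : (m - 1) / 2 ^ J + 1 = 1 := by
        rw [Nat.div_eq_of_lt (by omega)]
      unfold bx
      rw [this]
      ext b
      simp [funext_iff]
    have e : ∀ {n : ℕ} (Z : Fin n → EuclideanSpace ℝ (Fin d)), (∀ i, Z i ∈ hcube d) →
        (Finset.univ.filter (fun a => idx m J (Z a) = 0)) = Finset.univ := by
      intro n Z hZ
      refine Finset.filter_true_of_mem fun a _ => ?_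
      have := idx_mem_bx (j := J) hm _ (hZ a)
      rw [hb] at this
      simpa using this
    unfold VV
    rw [hb, Finset.sum_singleton, e X hX, e Y hY]; rfl
  rw [h1]
  clear h1 hJ
  induction J with
  | zero => simp
  | succ J ih =>
    rw [Finset.sum_range_succ]
    have := VV_step m J hm X Y hX hY
    linarith


noncomputable def pw (r : ℝ) (n : ℕ) : ℝ≥0∞ := ENNReal.ofReal (Real.exp (-r) * r ^ n / n.factorial)

noncomputable def PE {E : Type*} [MeasurableSpace E] (r : ℝ) (μ : Measure E)
    (F : ∀ n, (Fin n → E) → ℝ≥0∞) : ℝ≥0∞ :=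
  ∑' n, pw r n * ∫⁻ x, F n x ∂(Measure.pi fun _ => μ)

lemma pw_sum {r : ℝ} (hr : 0 ≤ r) : ∑' n, pw r n = 1 := by
  have h : HasSum (fun n : ℕ => Real.exp (-r) * r ^ n / n.factorial) 1 :=
    hasSum_one_poissonMeasure ⟨r, hr⟩
  unfold pw
  rw [← ENNReal.ofReal_tsum_of_nonneg (fun n => by positivity) h.summable]
  rw [h.tsum_eq]
  simp

lemma pw_succ {r : ℝ} (hr : 0 ≤ r) (n : ℕ) :
    pw r (n + 1) * ((n + 1 : ℕ) : ℝ≥0∞) = ENNReal.ofReal r * pw r n := by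
  unfold pw
  rw [← ENNReal.ofReal_natCast, ← ENNReal.ofReal_mul (by positivity), ← ENNReal.ofReal_mul hr]
  congr 1
  rw [Nat.factorial_succ]
  push_cast
  field_simp
  ring

lemma pw_mean {r : ℝ} (hr : 0 ≤ r) : ∑' n, pw r n * (n : ℝ≥0∞) = ENNReal.ofReal r := by
  rw [tsum_eq_zero_add' ENNReal.summable]
  simp only [pw_succ hr]
  rw [ENNReal.tsum_mul_left, pw_sum hr]
  simp

lemma pw_sq {r : ℝ} (hr : 0 ≤ r) : ∑' n, pw r n * (n : ℝ≥0∞) ^ 2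
    = ENNReal.ofReal r * ENNReal.ofReal r + ENNReal.ofReal r := by
  rw [tsum_eq_zero_add' ENNReal.summable]
  have : ∀ n, pw r (n + 1) * (((n + 1 : ℕ)) : ℝ≥0∞) ^ 2
      = ENNReal.ofReal r * (pw r n * n) + ENNReal.ofReal r * pw r n := by
    intro n
    rw [pow_two, ← mul_assoc, pw_succ hr]
    push_cast
    ring
  simp only [this]
  rw [ENNReal.tsum_add, ENNReal.tsum_mul_left, ENNReal.tsum_mul_left, pw_sum hr, pw_mean hr]
  simp

lemma pw_absdiff {r c : ℝ} (hr : 0 ≤ r) (hc : 0 < c) (h : 2 * r ≤ c ^ 2) :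
    ∑' n₁ : ℕ, pw r n₁ * ∑' n₂ : ℕ, pw r n₂ * ENNReal.ofReal |(n₁ : ℝ) - n₂| ≤ ENNReal.ofReal c := by
  set R := ENNReal.ofReal r with hR
  have hD : ∑' n₁ : ℕ, pw r n₁ * ∑' n₂ : ℕ, pw r n₂ * ENNReal.ofReal (((n₁ : ℝ) - n₂) ^ 2) = 2 * R := by
    have h1 : ∑' n₁ : ℕ, pw r n₁ * ∑' n₂ : ℕ, pw r n₂ * (ENNReal.ofReal (((n₁ : ℝ) - n₂) ^ 2)
        + 2 * (n₁ * n₂)) = ∑' n₁ : ℕ, pw r n₁ * ∑' n₂ : ℕ, pw r n₂ * ((n₁ : ℝ≥0∞) ^ 2 + (n₂ : ℝ≥0∞) ^ 2) := by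
      congr 1; funext n₁; congr 2; funext n₂; congr 1
      rw [← ENNReal.ofReal_natCast, ← ENNReal.ofReal_natCast, ← ENNReal.ofReal_mul (by positivity),
        ← ENNReal.ofReal_pow (by positivity), ← ENNReal.ofReal_pow (by positivity),
        ← ENNReal.ofReal_add (by positivity) (by positivity),
        show (2 : ℝ≥0∞) = ENNReal.ofReal 2 by simp, ← ENNReal.ofReal_mul (by positivity),
        ← ENNReal.ofReal_add (by positivity) (by positivity)]
      congr 1; ring
    have h2 : ∀ n₁ : ℕ, ∑' n₂ : ℕ, pw r n₂ * (ENNReal.ofReal (((n₁ : ℝ) - n₂) ^ 2)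
        + 2 * (n₁ * n₂)) = ∑' n₂ : ℕ, pw r n₂ * (ENNReal.ofReal (((n₁ : ℝ) - n₂) ^ 2)) + 2 * n₁ * R := by
      intro n₁
      rw [hR, ← pw_mean hr, ← ENNReal.tsum_mul_left, ← ENNReal.tsum_add]
      congr 1; funext n₂; ring
    have h3 : ∀ n₁ : ℕ, ∑' n₂ : ℕ, pw r n₂ * ((n₁ : ℝ≥0∞) ^ 2 + (n₂ : ℝ≥0∞) ^ 2)
        = (n₁ : ℝ≥0∞) ^ 2 + (R * R + R) := by
      intro n₁
      simp only [mul_add]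
      rw [ENNReal.tsum_add, ENNReal.tsum_mul_right, pw_sum hr, pw_sq hr, one_mul]
    simp only [h2, h3] at h1
    simp only [mul_add (pw _ _)] at h1
    rw [ENNReal.tsum_add, ENNReal.tsum_add, ENNReal.tsum_add, ENNReal.tsum_mul_right,
      ENNReal.tsum_mul_right, pw_sum hr, pw_sq hr] at h1
    have h4 : ∑' n : ℕ, pw r n * (2 * (n : ℝ≥0∞) * R) = 2 * R * R := by
      rw [show 2 * R * R = (2 * R) * ENNReal.ofReal r by rw [hR], ← pw_mean hr,
        ← ENNReal.tsum_mul_left]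
      congr 1; funext n; ring
    rw [h4] at h1
    have hfin : 2 * R * R ≠ ∞ := by
      rw [hR]
      exact ENNReal.mul_ne_top (ENNReal.mul_ne_top (by simp) ENNReal.ofReal_ne_top) ENNReal.ofReal_ne_top
    refine (ENNReal.add_left_inj hfin).1 (h1.trans ?_)
    ring
  have hb : ∀ n₁ n₂ : ℕ, ENNReal.ofReal |(n₁ : ℝ) - n₂| ≤
      ENNReal.ofReal (1 / (2 * c)) * ENNReal.ofReal (((n₁ : ℝ) - n₂) ^ 2) + ENNReal.ofReal (c / 2) := by
    intro n₁ n₂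
    rw [← ENNReal.ofReal_mul (by positivity), ← ENNReal.ofReal_add (by positivity) (by positivity)]
    apply ENNReal.ofReal_le_ofReal
    rw [← sq_abs]
    set t := |(n₁ : ℝ) - n₂|
    have : 1 / (2 * c) * t ^ 2 + c / 2 - t = (t - c) ^ 2 / (2 * c) := by field_simp; ring
    have : 0 ≤ (t - c) ^ 2 / (2 * c) := by positivity
    linarith
  calc ∑' n₁ : ℕ, pw r n₁ * ∑' n₂ : ℕ, pw r n₂ * ENNReal.ofReal |(n₁ : ℝ) - n₂|
      ≤ ∑' n₁ : ℕ, pw r n₁ * ∑' n₂ : ℕ, pw r n₂ *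
        (ENNReal.ofReal (1 / (2 * c)) * ENNReal.ofReal (((n₁ : ℝ) - n₂) ^ 2) + ENNReal.ofReal (c / 2)) := by
        gcongr; exact hb _ _
    _ = ENNReal.ofReal (1 / (2 * c)) * (2 * R) + ENNReal.ofReal (c / 2) := by
        rw [← hD, ← ENNReal.tsum_mul_left]
        have : ∀ n₁ : ℕ, ∑' n₂ : ℕ, pw r n₂ *
          (ENNReal.ofReal (1 / (2 * c)) * ENNReal.ofReal (((n₁ : ℝ) - n₂) ^ 2) + ENNReal.ofReal (c / 2))
          = ENNReal.ofReal (1 / (2 * c)) * ∑' n₂ : ℕ, pw r n₂ * ENNReal.ofReal (((n₁ : ℝ) - n₂) ^ 2)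
            + ENNReal.ofReal (c / 2) := by
          intro n₁
          simp only [mul_add]
          rw [ENNReal.tsum_add, ENNReal.tsum_mul_right, pw_sum hr, one_mul, ← ENNReal.tsum_mul_left]
          congr 2; funext n₂; ring
        simp only [this]
        simp only [mul_add]
        rw [ENNReal.tsum_add, ENNReal.tsum_mul_right, pw_sum hr, one_mul]
        congr 2; funext n₂; ring
    _ ≤ ENNReal.ofReal c := by
        rw [hR, show (2 : ℝ≥0∞) = ENNReal.ofReal 2 by simp, ← ENNReal.ofReal_mul (by positivity),
          ← ENNReal.ofReal_mul (by positivity), ← ENNReal.ofReal_add (by positivity) (by positivity)]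
        apply ENNReal.ofReal_le_ofReal
        have : 1 / (2 * c) * (2 * r) ≤ 1 / (2 * c) * c ^ 2 := by gcongr
        have e : 1 / (2 * c) * c ^ 2 = c / 2 := by field_simp
        linarith

lemma pi_smul_measure {ι : Type*} [Fintype ι] {E : Type*} [MeasurableSpace E] (ν : ι → Measure E)
    [∀ i, IsProbabilityMeasure (ν i)] (c : ι → ℝ) :
    Measure.pi (fun i => ENNReal.ofReal (c i) • ν i) = (∏ i, ENNReal.ofReal (c i)) • Measure.pi ν := by
  have : ∀ i, IsFiniteMeasure (ENNReal.ofReal (c i) • ν i) := fun i =>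
    Measure.smul_finite (ν i) ENNReal.ofReal_ne_top
  refine Measure.pi_eq fun s hs => ?_
  rw [Measure.smul_apply, Measure.pi_pi, smul_eq_mul, ← Finset.prod_mul_distrib]
  rfl

lemma pi_map_inj {ι κ : Type*} [Fintype ι] [Fintype κ] {E : Type*} [MeasurableSpace E]
    (ν : ι → Measure E) [∀ i, IsProbabilityMeasure (ν i)] (e : κ → ι) (he : Function.Injective e) :
    (Measure.pi ν).map (fun x k => x (e k)) = Measure.pi (fun k => ν (e k)) := by
  symm
  refine Measure.pi_eq fun s hs => ?_
  have hmeas : Measurable (fun (x : ι → E) (k : κ) => x (e k)) := by fun_prop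
  rw [Measure.map_apply hmeas (MeasurableSet.univ_pi hs)]
  have : (fun (x : ι → E) (k : κ) => x (e k)) ⁻¹' (Set.univ.pi s)
      = Set.univ.pi (fun i => {z | ∀ k, e k = i → z ∈ s k}) := by
    ext x
    simp only [Set.mem_preimage, Set.mem_pi, Set.mem_univ, true_imp_iff, Set.mem_ofPred_eq]
    constructor
    · rintro h i k rfl; exact h k
    · intro h k; exact h _ k rfl
  rw [this, Measure.pi_pi]
  symm
  refine Fintype.prod_of_injective e he _ _ ?_ ?_
  · intro i hi
    have : {z : E | ∀ k, e k = i → z ∈ s k} = Set.univ := by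
      ext z
      simp only [Set.mem_ofPred_eq, Set.mem_univ, iff_true]
      intro k hk
      exact absurd ⟨k, hk⟩ hi
    rw [this]; simp
  · intro k
    congr 1
    ext z
    simp only [Set.mem_ofPred_eq]
    constructor
    · intro h l hl; rw [he hl]; exact h
    · intro h; exact h k rfl

lemma exists_cond {E : Type*} [MeasurableSpace E] (μ : Measure E) [IsProbabilityMeasure μ]
    (A : Set E) (p : ℝ) (hp : μ A = ENNReal.ofReal p) :
    ∃ ν : Measure E, IsProbabilityMeasure ν ∧ μ.restrict A = ENNReal.ofReal p • ν := by
  rw [← hp]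
  by_cases h : μ A = 0
  · exact ⟨μ, inferInstance, by rw [h, zero_smul]; exact Measure.restrict_eq_zero.2 h⟩
  · have hf : μ A ≠ ∞ := measure_ne_top μ A
    refine ⟨(μ A)⁻¹ • μ.restrict A, ⟨?_⟩, ?_⟩
    · simp [ENNReal.inv_mul_cancel h hf]
    · rw [smul_smul, ENNReal.mul_inv_cancel h hf, one_smul]

open Classical in
lemma thin_fixed {E : Type*} [MeasurableSpace E] (μ ν : Measure E) [IsProbabilityMeasure μ]
    [IsProbabilityMeasure ν] (A : Set E) (hA : MeasurableSet A) (p : ℝ) (hp0 : 0 ≤ p) (hp1 : p ≤ 1)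
    (h : μ.restrict A = ENNReal.ofReal p • ν) (F : ∀ n, (Fin n → E) → ℝ≥0∞)
    (hF : ∀ n, Measurable (F n)) (n : ℕ) :
    ∫⁻ x, F _ (rs (Finset.univ.filter (fun a => x a ∈ A)) x) ∂(Measure.pi fun _ : Fin n => μ)
    = ∑ S : Finset (Fin n), (ENNReal.ofReal p ^ S.card * ENNReal.ofReal (1 - p) ^ (n - S.card)) *
      ∫⁻ u, F S.card u ∂(Measure.pi fun _ => ν) := by
  have hpA : μ A = ENNReal.ofReal p := by
    rw [← Measure.restrict_apply_univ, h]; simp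
  have hpAc : μ Aᶜ = ENNReal.ofReal (1 - p) := by
    rw [prob_compl_eq_one_sub hA, hpA, ENNReal.ofReal_sub _ hp0]; simp
  obtain ⟨ν', hν', h'⟩ := exists_cond μ Aᶜ (1 - p) hpAc
  have hrs : ∀ S : Finset (Fin n), Measurable (fun x : Fin n → E => rs S x) := by
    intro S; unfold rs; fun_prop
  have hset : ∀ S : Finset (Fin n), {x : Fin n → E | Finset.univ.filter (fun a => x a ∈ A) = S}
      = Set.univ.pi (fun i => if i ∈ S then A else Aᶜ) := by
    intro S
    ext x
    simp only [Set.mem_ofPred_eq, Set.mem_pi, Set.mem_univ, true_imp_iff, Finset.ext_iff,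
      Finset.mem_filter, Finset.mem_univ, true_and]
    refine forall_congr' fun i => ?_
    by_cases hi : i ∈ S <;> simp [hi]
  have hms : ∀ S : Finset (Fin n), MeasurableSet
      (Set.univ.pi (fun i => if i ∈ S then A else Aᶜ) : Set (Fin n → E)) := by
    intro S
    refine MeasurableSet.univ_pi fun i => ?_
    split_ifs
    · exact hA
    · exact hA.compl
  have e1 : ∀ x : Fin n → E, F _ (rs (Finset.univ.filter (fun a => x a ∈ A)) x)
      = ∑ S : Finset (Fin n), Set.indicator (Set.univ.pi (fun i => if i ∈ S then A else Aᶜ))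
        (fun x => F _ (rs S x)) x := by
    intro x
    rw [Finset.sum_eq_single (Finset.univ.filter (fun a => x a ∈ A))]
    · rw [← hset, Set.indicator_of_mem]; rfl
    · intro S _ hS
      rw [← hset, Set.indicator_of_notMem]
      exact fun hh => hS hh.symm
    · simp
  simp only [e1]
  have hmi : ∀ S : Finset (Fin n), Measurable (Set.indicator (Set.univ.pi (fun i => if i ∈ S then A else Aᶜ))
        (fun x => F _ (rs S x))) := fun S => ((hF _).comp (hrs S)).indicator (hms S)
  rw [lintegral_finsetSum _ (fun S _ => hmi S)]
  refine Finset.sum_congr rfl fun S _ => ?_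
  rw [lintegral_indicator (hms S), Measure.restrict_pi_pi]
  have e2 : (fun i : Fin n => μ.restrict (if i ∈ S then A else Aᶜ)) =
      fun i => ENNReal.ofReal (if i ∈ S then p else 1 - p) • (if i ∈ S then ν else ν') := by
    funext i
    split_ifs
    · exact h
    · exact h'
  have : ∀ i : Fin n, IsProbabilityMeasure (if i ∈ S then ν else ν') := by
    intro i; split_ifs <;> infer_instance
  rw [e2, pi_smul_measure (fun i : Fin n => if i ∈ S then ν else ν'), lintegral_smul_measure,
    smul_eq_mul]
  congr 1
  · have : ∀ i : Fin n, ENNReal.ofReal (if i ∈ S then p else 1 - p) =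
      if i ∈ S then ENNReal.ofReal p else ENNReal.ofReal (1 - p) := by intro i; split_ifs <;> rfl
    simp only [this]
    rw [Finset.prod_ite, Finset.prod_const, Finset.prod_const]
    congr 2
    · congr 1; ext; simp
    · rw [← Finset.compl_filter, Finset.card_compl]
      simp
  · have e3 := pi_map_inj (fun i : Fin n => if i ∈ S then ν else ν') (S.orderEmbOfFin rfl)
      (S.orderEmbOfFin rfl).injective
    simp only [Finset.orderEmbOfFin_mem, if_true] at e3
    rw [← e3, lintegral_map (hF _) (by fun_prop)]
    rfl

lemma pw_split {r p : ℝ} (hr : 0 ≤ r) (hp0 : 0 ≤ p) (hp1 : p ≤ 1) (k l : ℕ) :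
    pw r (k + l) * ((k + l).choose k * (ENNReal.ofReal p ^ k * ENNReal.ofReal (1 - p) ^ l))
      = pw (r * p) k * pw (r * (1 - p)) l := by
  have hq : 0 ≤ 1 - p := by linarith
  unfold pw
  rw [← ENNReal.ofReal_natCast, ← ENNReal.ofReal_pow hp0, ← ENNReal.ofReal_pow hq,
    ← ENNReal.ofReal_mul (by positivity), ← ENNReal.ofReal_mul (by positivity),
    ← ENNReal.ofReal_mul (by positivity), ← ENNReal.ofReal_mul (by positivity)]
  congr 1
  rw [Nat.cast_add_choose, show -r = -(r * p) + -(r * (1 - p)) by ring, Real.exp_add]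
  rw [mul_pow, mul_pow, pow_add]
  field_simp

lemma tsum_antidiag (f : ℕ → ℕ → ℝ≥0∞) :
    ∑' n, ∑ k ∈ Finset.range (n + 1), f k (n - k) = ∑' k, ∑' l, f k l := by
  rw [← ENNReal.tsum_prod, ← Finset.HasAntidiagonal.sigmaAntidiagonalEquivProd.tsum_eq,
    ENNReal.tsum_sigma']
  congr 1; funext n
  rw [tsum_fintype, ← Finset.Nat.sum_antidiagonal_eq_sum_range_succ f,
    ← Finset.sum_coe_sort (Finset.HasAntidiagonal.antidiagonal n)]
  rfl

open Classical in
lemma PE_thin {E : Type*} [MeasurableSpace E] (μ ν : Measure E) [IsProbabilityMeasure μ]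
    [IsProbabilityMeasure ν] (A : Set E) (hA : MeasurableSet A) (p : ℝ) (hp0 : 0 ≤ p) (hp1 : p ≤ 1)
    (h : μ.restrict A = ENNReal.ofReal p • ν) (F : ∀ n, (Fin n → E) → ℝ≥0∞)
    (hF : ∀ n, Measurable (F n)) (r : ℝ) (hr : 0 ≤ r) :
    PE r μ (fun n x => F _ (rs (Finset.univ.filter (fun a => x a ∈ A)) x)) = PE (r * p) ν F := by
  unfold PE
  simp only [thin_fixed μ ν A hA p hp0 hp1 h F hF]
  have e : ∀ n, pw r n * ∑ S : Finset (Fin n), (ENNReal.ofReal p ^ S.card *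
      ENNReal.ofReal (1 - p) ^ (n - S.card)) * ∫⁻ u, F S.card u ∂(Measure.pi fun _ => ν)
      = ∑ k ∈ Finset.range (n + 1), (pw (r * p) k * ∫⁻ u, F k u ∂(Measure.pi fun _ => ν)) *
        pw (r * (1 - p)) (n - k) := by
    intro n
    rw [← Finset.powerset_univ, Finset.sum_powerset_apply_card (fun k => (ENNReal.ofReal p ^ k *
      ENNReal.ofReal (1 - p) ^ (n - k)) * ∫⁻ u, F k u ∂(Measure.pi fun _ => ν)), Finset.card_fin,
      Finset.mul_sum]
    refine Finset.sum_congr rfl fun k hk => ?_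
    obtain ⟨l, rfl⟩ := Nat.exists_eq_add_of_le (Nat.lt_succ_iff.1 (Finset.mem_range.1 hk))
    rw [Nat.add_sub_cancel_left, mul_right_comm (pw (r * p) k), ← pw_split hr hp0 hp1, nsmul_eq_mul]
    ring
  simp only [e]
  rw [tsum_antidiag (fun k l => (pw (r * p) k * ∫⁻ u, F k u ∂(Measure.pi fun _ => ν)) *
        pw (r * (1 - p)) l)]
  congr 1; funext k
  rw [ENNReal.tsum_mul_left, pw_sum (mul_nonneg hr (by linarith)), mul_one]


def Meas2 {E : Type*} [MeasurableSpace E]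
    (F : ∀ n₁ n₂, (Fin n₁ → E) → (Fin n₂ → E) → ℝ≥0∞) : Prop :=
  ∀ n₁ n₂, Measurable (fun p : (Fin n₁ → E) × (Fin n₂ → E) => F n₁ n₂ p.1 p.2)

noncomputable def PE2 {E : Type*} [MeasurableSpace E] (r : ℝ) (μ : Measure E)
    (F : ∀ n₁ n₂, (Fin n₁ → E) → (Fin n₂ → E) → ℝ≥0∞) : ℝ≥0∞ :=
  ∑' n₁, ∑' n₂, pw r n₁ * (pw r n₂ * ∫⁻ p, F n₁ n₂ p.1 p.2
    ∂((Measure.pi fun _ => μ).prod (Measure.pi fun _ => μ)))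

section
variable {E : Type*} [MeasurableSpace E]

lemma Meas2.inner {F : ∀ n₁ n₂, (Fin n₁ → E) → (Fin n₂ → E) → ℝ≥0∞} (hF : Meas2 F) (r : ℝ)
    (μ : Measure E) [IsProbabilityMeasure μ] (n₁ : ℕ) :
    Measurable (fun x => PE r μ (fun n₂ y => F n₁ n₂ x y)) := by
  unfold PE
  refine Measurable.tsum fun n₂ => Measurable.const_mul ?_ _
  exact Measurable.lintegral_prod_right' (hF n₁ n₂)

lemma PE2_eq (r : ℝ) (μ : Measure E) [IsProbabilityMeasure μ]
    {F : ∀ n₁ n₂, (Fin n₁ → E) → (Fin n₂ → E) → ℝ≥0∞} (hF : Meas2 F) :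
    PE2 r μ F = PE r μ (fun n₁ x => PE r μ (fun n₂ y => F n₁ n₂ x y)) := by
  unfold PE2 PE
  congr 1; funext n₁
  have hm : ∀ n₂, Measurable (fun x => ∫⁻ y, F n₁ n₂ x y ∂(Measure.pi fun _ => μ)) :=
    fun n₂ => Measurable.lintegral_prod_right' (hF n₁ n₂)
  rw [lintegral_tsum (fun n₂ => ((hm n₂).const_mul _).aemeasurable), ← ENNReal.tsum_mul_left]
  congr 1; funext n₂
  rw [lintegral_const_mul _ (hm n₂), lintegral_prod _ (hF n₁ n₂).aemeasurable]

lemma PE2_mono (r : ℝ) (μ : Measure E) {F G : ∀ n₁ n₂, (Fin n₁ → E) → (Fin n₂ → E) → ℝ≥0∞}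
    (h : ∀ n₁ n₂, ∀ᵐ p ∂((Measure.pi fun _ : Fin n₁ => μ).prod (Measure.pi fun _ : Fin n₂ => μ)),
      F n₁ n₂ p.1 p.2 ≤ G n₁ n₂ p.1 p.2) : PE2 r μ F ≤ PE2 r μ G := by
  unfold PE2
  refine ENNReal.tsum_le_tsum fun n₁ => ENNReal.tsum_le_tsum fun n₂ => ?_
  have := lintegral_mono_ae (h n₁ n₂)
  exact mul_le_mul' le_rfl (mul_le_mul' le_rfl this)

lemma PE2_add (r : ℝ) (μ : Measure E) {F G : ∀ n₁ n₂, (Fin n₁ → E) → (Fin n₂ → E) → ℝ≥0∞}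
    (hF : Meas2 F) : PE2 r μ (fun n₁ n₂ x y => F n₁ n₂ x y + G n₁ n₂ x y)
      = PE2 r μ F + PE2 r μ G := by
  unfold PE2
  simp only [lintegral_add_left (hF _ _), mul_add, ENNReal.tsum_add]

lemma PE2_const_mul (r : ℝ) (μ : Measure E) {F : ∀ n₁ n₂, (Fin n₁ → E) → (Fin n₂ → E) → ℝ≥0∞}
    (hF : Meas2 F) (c : ℝ≥0∞) : PE2 r μ (fun n₁ n₂ x y => c * F n₁ n₂ x y) = c * PE2 r μ F := by
  unfold PE2
  simp only [lintegral_const_mul _ (hF _ _), ← ENNReal.tsum_mul_left]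
  congr 1; funext n₁; congr 1; funext n₂; ring

lemma PE2_sum (r : ℝ) (μ : Measure E) {ι : Type*} (t : Finset ι)
    (F : ι → ∀ n₁ n₂, (Fin n₁ → E) → (Fin n₂ → E) → ℝ≥0∞)
    (hF : ∀ i, Meas2 (F i)) : PE2 r μ (fun n₁ n₂ x y => ∑ i ∈ t, F i n₁ n₂ x y)
      = ∑ i ∈ t, PE2 r μ (F i) := by
  classical
  induction t using Finset.induction_on with
  | empty => simp [PE2]
  | insert a s ha ih =>
    simp only [Finset.sum_insert ha]
    rw [PE2_add r μ (hF a), ih]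

lemma meas_fin {Ω ι : Type*} [Fintype ι] [MeasurableSpace Ω] (g : Ω → ι)
    (hg : ∀ i, MeasurableSet {ω | g ω = i}) (h : ι → Ω → ℝ≥0∞) (hh : ∀ i, Measurable (h i)) :
    Measurable fun ω => h (g ω) ω := by
  classical
  have : (fun ω => h (g ω) ω) = fun ω => ∑ i, Set.indicator {ω | g ω = i} (h i) ω := by
    funext ω
    rw [Finset.sum_eq_single (g ω)]
    · rw [Set.indicator_of_mem]; rfl
    · intro b _ hb
      rw [Set.indicator_of_notMem]
      exact fun hh => hb hh.symm
    · simp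
  rw [this]
  exact Finset.measurable_sum _ fun i _ => (hh i).indicator (hg i)

open Classical in
lemma meas_filter {n : ℕ} {A : Set E} (hA : MeasurableSet A) (S : Finset (Fin n)) :
    MeasurableSet {x : Fin n → E | Finset.univ.filter (fun a => x a ∈ A) = S} := by
  have : {x : Fin n → E | Finset.univ.filter (fun a => x a ∈ A) = S}
      = Set.univ.pi (fun i => if i ∈ S then A else Aᶜ) := by
    ext x
    simp only [Set.mem_ofPred_eq, Set.mem_pi, Set.mem_univ, true_imp_iff, Finset.ext_iff,
      Finset.mem_filter, Finset.mem_univ, true_and]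
    refine forall_congr' fun i => ?_
    by_cases hi : i ∈ S <;> simp [hi]
  rw [this]
  refine MeasurableSet.univ_pi fun i => ?_
  split_ifs
  · exact hA
  · exact hA.compl

open Classical in
noncomputable def thin (A : Set E) (F : ∀ n₁ n₂, (Fin n₁ → E) → (Fin n₂ → E) → ℝ≥0∞) :
    ∀ n₁ n₂, (Fin n₁ → E) → (Fin n₂ → E) → ℝ≥0∞ :=
  fun _ _ x y => F _ _ (rs (Finset.univ.filter (fun a => x a ∈ A)) x)
    (rs (Finset.univ.filter (fun a => y a ∈ A)) y)

lemma Meas2.thin {F : ∀ n₁ n₂, (Fin n₁ → E) → (Fin n₂ → E) → ℝ≥0∞} (hF : Meas2 F)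
    {A : Set E} (hA : MeasurableSet A) : Meas2 (thin A F) := by
  classical
  intro n₁ n₂
  refine meas_fin (fun p : (Fin n₁ → E) × (Fin n₂ → E) =>
    (Finset.univ.filter (fun a => p.1 a ∈ A), Finset.univ.filter (fun a => p.2 a ∈ A))) ?_
    (fun ST p => F _ _ (rs ST.1 p.1) (rs ST.2 p.2)) ?_
  · rintro ⟨S, T⟩
    have := (measurable_fst (meas_filter hA S)).inter
      (measurable_snd (α := Fin n₁ → E) (meas_filter hA T))
    convert this using 1
    ext p
    simp [Prod.ext_iff]
  · rintro ⟨S, T⟩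
    have h : Measurable (fun p : (Fin n₁ → E) × (Fin n₂ → E) => (rs S p.1, rs T p.2)) := by
      unfold rs; fun_prop
    exact (hF _ _).comp h

open Classical in
lemma PE2_thin (μ ν : Measure E) [IsProbabilityMeasure μ]
    [IsProbabilityMeasure ν] (A : Set E) (hA : MeasurableSet A) (p : ℝ) (hp0 : 0 ≤ p) (hp1 : p ≤ 1)
    (h : μ.restrict A = ENNReal.ofReal p • ν)
    {F : ∀ n₁ n₂, (Fin n₁ → E) → (Fin n₂ → E) → ℝ≥0∞} (hF : Meas2 F) (r : ℝ) (hr : 0 ≤ r) :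
    PE2 r μ (thin A F) = PE2 (r * p) ν F := by
  rw [PE2_eq r μ (hF.thin hA), PE2_eq _ ν hF]
  unfold thin
  rw [← PE_thin μ ν A hA p hp0 hp1 h (fun n x => PE (r * p) ν (fun n₂ y => F n n₂ x y))
    (fun n => hF.inner _ _ n) r hr]
  congr 1; funext n₁ x
  have hm : ∀ (k : ℕ) (u : Fin k → E) (n : ℕ), Measurable (fun y => F k n u y) := fun k u n =>
    (hF k n).comp (measurable_prodMk_left (x := u))
  exact PE_thin μ ν A hA p hp0 hp1 h
    (fun n₂ y => F _ n₂ (rs (Finset.univ.filter (fun a => x a ∈ A)) x) y)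
    (fun n => hm _ _ n) r hr

lemma PE2_map (r : ℝ) (μ : Measure E) [IsProbabilityMeasure μ] (T : E → E) (hT : Measurable T)
    {F : ∀ n₁ n₂, (Fin n₁ → E) → (Fin n₂ → E) → ℝ≥0∞} (hF : Meas2 F) :
    PE2 r (μ.map T) F = PE2 r μ (fun n₁ n₂ x y => F n₁ n₂ (fun i => T (x i)) (fun i => T (y i))) := by
  have : IsProbabilityMeasure (μ.map T) := Measure.isProbabilityMeasure_map hT.aemeasurable
  unfold PE2
  congr 1; funext n₁; congr 1; funext n₂; congr 2
  have h1 : ∀ n : ℕ, Measure.pi (fun _ : Fin n => μ.map T)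
      = (Measure.pi (fun _ : Fin n => μ)).map (fun x i => T (x i)) := fun n =>
    (Measure.pi_map_pi (fun _ => hT.aemeasurable)).symm
  have hm : ∀ n : ℕ, Measurable (fun (x : Fin n → E) i => T (x i)) := fun n => by fun_prop
  rw [h1, h1, Measure.map_prod_map _ _ (hm _) (hm _), lintegral_map (hF _ _) ((hm _).prodMap (hm _))]
  rfl

lemma PE2_count (r : ℝ) (μ : Measure E) [IsProbabilityMeasure μ] (g : ℕ → ℕ → ℝ≥0∞) :
    PE2 r μ (fun n₁ n₂ _ _ => g n₁ n₂) = ∑' n₁, pw r n₁ * ∑' n₂, pw r n₂ * g n₁ n₂ := by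
  unfold PE2
  simp only [lintegral_const, measure_univ, mul_one, ENNReal.tsum_mul_left]

lemma PE2_absdiff (r : ℝ) (hr : 0 ≤ r) (μ : Measure E) [IsProbabilityMeasure μ] (A : Set E)
    (hA : MeasurableSet A) (c : ℝ) (hc : 0 < c) (q : ℝ) (hq0 : 0 ≤ q) (hq : μ A ≤ ENNReal.ofReal q)
    (h : 2 * (r * q) ≤ c ^ 2) :
    PE2 r μ (thin A (fun n₁ n₂ _ _ => ENNReal.ofReal |(n₁ : ℝ) - n₂|)) ≤ ENNReal.ofReal c := by
  have hpe : μ A = ENNReal.ofReal (μ.real A) := by simp [Measure.real]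
  obtain ⟨ν, hν, h1⟩ := exists_cond μ A (μ.real A) hpe
  have hp1 : μ.real A ≤ 1 := measureReal_le_one
  have hpq : μ.real A ≤ q := by
    rw [hpe] at hq
    exact (ENNReal.ofReal_le_ofReal_iff hq0).1 hq
  rw [PE2_thin μ ν A hA _ measureReal_nonneg hp1 h1 (fun _ _ => measurable_const) r hr, PE2_count]
  refine pw_absdiff (mul_nonneg hr measureReal_nonneg) hc (le_trans ?_ h)
  gcongr

end


lemma volume_box {d : ℕ} (s : Fin d → Set ℝ) (hs : ∀ i, MeasurableSet (s i)) :
    volume {x : EuclideanSpace ℝ (Fin d) | ∀ i, x i ∈ s i} = ∏ i, volume (s i) := by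
  have h := (PiLp.volume_preserving_ofLp (Fin d)).measure_preimage
    (MeasurableSet.univ_pi hs).nullMeasurableSet
  rw [volume_pi_pi] at h
  rw [← h]
  congr 1
  ext x
  simp

lemma measurable_box {d : ℕ} (s : Fin d → Set ℝ) (hs : ∀ i, MeasurableSet (s i)) :
    MeasurableSet {x : EuclideanSpace ℝ (Fin d) | ∀ i, x i ∈ s i} := by
  have : {x : EuclideanSpace ℝ (Fin d) | ∀ i, x i ∈ s i} = ⋂ i, (fun x => x i) ⁻¹' (s i) := by
    ext x; simp
  rw [this]
  refine MeasurableSet.iInter fun i => ?_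
  have : Measurable (fun x : EuclideanSpace ℝ (Fin d) => x i) := by fun_prop
  exact this (hs i)

lemma measurable_cell (d m j : ℕ) (b : Fin d → ℕ) : MeasurableSet (cell d m j b) :=
  measurable_box _ fun _ => measurableSet_Ico

lemma measurable_hcube (d : ℕ) : MeasurableSet (hcube d) :=
  measurable_box _ fun _ => measurableSet_Ico

lemma volume_cell (d m j : ℕ) (b : Fin d → ℕ) :
    volume (cell d m j b) = ENNReal.ofReal ((2 ^ j / m) ^ d) := by
  unfold cell
  rw [volume_box _ fun _ => measurableSet_Ico]
  have : ∀ i, volume (Set.Ico ((b i : ℝ) * (2 ^ j / m)) (((b i : ℝ) + 1) * (2 ^ j / m)))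
      = ENNReal.ofReal (2 ^ j / m) := by
    intro i
    rw [Real.volume_Ico]; congr 1; ring
  simp only [this]
  rw [Finset.prod_const, Finset.card_fin, ENNReal.ofReal_pow (by positivity)]

lemma volume_unitCube (d : ℕ) : volume (unitCube d) = 1 := by
  unfold unitCube
  rw [volume_box _ fun _ => measurableSet_Icc]; simp

lemma volume_hcube (d : ℕ) : volume (hcube d) = 1 := by
  unfold hcube
  rw [volume_box _ fun _ => measurableSet_Ico]; simp

instance unif_prob (d : ℕ) : IsProbabilityMeasure (unifCube d) :=
  ⟨by unfold unifCube; simp [volume_unitCube]⟩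

lemma unif_eq (d : ℕ) : unifCube d = volume.restrict (hcube d) := by
  unfold unifCube
  apply Measure.restrict_congr_set
  symm
  apply ae_eq_of_subset_of_measure_ge
  · intro x hx i; exact ⟨(hx i).1, (hx i).2.le⟩
  · rw [volume_unitCube, volume_hcube]
  · exact (measurable_hcube d).nullMeasurableSet
  · rw [volume_unitCube]; simp

lemma unif_cell_le (d m j : ℕ) (b : Fin d → ℕ) :
    unifCube d (cell d m j b) ≤ ENNReal.ofReal ((2 ^ j / m) ^ d) := by
  rw [← volume_cell d m j b]
  exact Measure.restrict_apply_le _ _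

lemma ae_hcube (d n : ℕ) : ∀ᵐ x ∂(Measure.pi fun _ : Fin n => unifCube d), ∀ i, x i ∈ hcube d := by
  rw [ae_all_iff]
  intro i
  have h : ∀ᵐ z ∂(unifCube d), z ∈ hcube d := by
    rw [unif_eq]
    exact ae_restrict_mem (measurable_hcube d)
  exact (Measure.quasiMeasurePreserving_eval (fun _ : Fin n => unifCube d) i).ae h

lemma ae_hcube2 (d n₁ n₂ : ℕ) : ∀ᵐ p ∂((Measure.pi fun _ : Fin n₁ => unifCube d).prod
    (Measure.pi fun _ : Fin n₂ => unifCube d)), (∀ i, p.1 i ∈ hcube d) ∧ (∀ i, p.2 i ∈ hcube d) := by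
  have h1 := Measure.quasiMeasurePreserving_fst (μ := Measure.pi fun _ : Fin n₁ => unifCube d)
    (ν := Measure.pi fun _ : Fin n₂ => unifCube d) |>.ae (ae_hcube d n₁)
  have h2 := Measure.quasiMeasurePreserving_snd (μ := Measure.pi fun _ : Fin n₁ => unifCube d)
    (ν := Measure.pi fun _ : Fin n₂ => unifCube d) |>.ae (ae_hcube d n₂)
  filter_upwards [h1, h2] with p a b using ⟨a, b⟩

noncomputable def TT (d m : ℕ) (b : Fin d → ℕ) (x : EuclideanSpace ℝ (Fin d)) :
    EuclideanSpace ℝ (Fin d) :=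
  ((m : ℝ)⁻¹) • (x + WithLp.toLp 2 (fun i => (b i : ℝ)))

lemma measurable_TT (d m : ℕ) (b : Fin d → ℕ) : Measurable (TT d m b) := by
  unfold TT; fun_prop

lemma dist_TT (d m : ℕ) (b : Fin d → ℕ) (x y : EuclideanSpace ℝ (Fin d)) :
    dist (TT d m b x) (TT d m b y) = (m : ℝ)⁻¹ * dist x y := by
  unfold TT
  rw [dist_smul₀, dist_add_right]; simp

lemma restrict_cell (d m : ℕ) (hm : 1 ≤ m) (b : Fin d → ℕ) (hb : b ∈ bx d m 0) :
    (unifCube d).restrict (cell d m 0 b) = ENNReal.ofReal (((m : ℝ)⁻¹) ^ d) •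
      (unifCube d).map (TT d m b) := by
  have hm' : (0 : ℝ) < m := by exact_mod_cast hm
  have hsub : cell d m 0 b ⊆ hcube d := by
    intro x hx i
    have h1 := hx i
    have h2 := Finset.mem_range.1 (Fintype.mem_piFinset.1 hb i)
    have h3 : (b i : ℝ) + 1 ≤ m := by
      have : b i + 1 ≤ m := by simp at h2; omega
      exact_mod_cast this
    rw [Set.mem_Ico] at h1
    refine ⟨le_trans (by positivity) h1.1, lt_of_lt_of_le h1.2 ?_⟩
    rw [pow_zero, mul_one_div, div_le_one hm']
    exact h3
  have hpre : TT d m b ⁻¹' (cell d m 0 b) = hcube d := by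
    ext x
    refine forall_congr' fun i => ?_
    simp only [TT, PiLp.smul_apply, PiLp.add_apply, smul_eq_mul, Set.mem_Ico, pow_zero, mul_one_div]
    rw [inv_mul_eq_div, div_le_div_iff_of_pos_right hm', div_lt_div_iff_of_pos_right hm']
    constructor <;> rintro ⟨h1, h2⟩ <;> constructor <;> linarith
  have hmap : (volume : Measure (EuclideanSpace ℝ (Fin d))).map (TT d m b)
      = ENNReal.ofReal ((m : ℝ) ^ d) • volume := by
    have e : TT d m b = (fun x => (m : ℝ)⁻¹ • x) ∘ (fun x => x + WithLp.toLp 2 (fun i => (b i : ℝ))) := rfl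
    rw [e, ← Measure.map_map (by fun_prop) (by fun_prop), map_add_right_eq_self]
    have := Measure.map_addHaar_smul (volume : Measure (EuclideanSpace ℝ (Fin d)))
      (r := (m : ℝ)⁻¹) (by positivity)
    erw [this]
    congr 2
    simp
  rw [unif_eq, Measure.restrict_restrict (measurable_cell d m 0 b), Set.inter_eq_left.2 hsub,
    ← hpre, ← Measure.restrict_map (measurable_TT d m b) (measurable_cell d m 0 b), hmap,
    Measure.restrict_smul, smul_smul, ← ENNReal.ofReal_mul (by positivity), ← mul_pow,
    inv_mul_cancel₀ hm'.ne']
  simp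


noncomputable def LF (d : ℕ) : ∀ n₁ n₂, (Fin n₁ → EuclideanSpace ℝ (Fin d)) →
    (Fin n₂ → EuclideanSpace ℝ (Fin d)) → ℝ≥0∞ := fun _ _ x y => ENNReal.ofReal (LMBM x y)

noncomputable def AD (d : ℕ) : ∀ n₁ n₂, (Fin n₁ → EuclideanSpace ℝ (Fin d)) →
    (Fin n₂ → EuclideanSpace ℝ (Fin d)) → ℝ≥0∞ := fun n₁ n₂ _ _ => ENNReal.ofReal |(n₁ : ℝ) - n₂|

lemma LF_meas (d : ℕ) : Meas2 (LF d) := fun _ _ => measurable_LMBM.ennreal_ofReal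

lemma AD_meas (d : ℕ) : Meas2 (AD d) := fun _ _ => measurable_const

lemma LMBM_nonneg {d N₁ N₂ : ℕ} (X : Fin N₁ → EuclideanSpace ℝ (Fin d))
    (Y : Fin N₂ → EuclideanSpace ℝ (Fin d)) : 0 ≤ LMBM X Y := LMBMon_nonneg _ _ _ _

lemma dist_hcube {d : ℕ} (x y : EuclideanSpace ℝ (Fin d)) (hx : x ∈ hcube d) (hy : y ∈ hcube d) :
    dist x y ≤ Real.sqrt d := by
  have h : hcube d = cell d 1 0 0 := by
    unfold hcube cell; simp
  rw [h] at hx hy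
  simpa using dist_cell 0 x y hx hy

lemma PE2_LF_ne_top (d : ℕ) (r : ℝ) (hr : 0 ≤ r) : PE2 r (unifCube d) (LF d) ≠ ∞ := by
  have h1 : PE2 r (unifCube d) (LF d) ≤
      PE2 r (unifCube d) (fun n₁ _ _ _ => (n₁ : ℝ≥0∞) * ENNReal.ofReal (Real.sqrt d)) := by
    refine PE2_mono r _ fun n₁ n₂ => ?_
    filter_upwards [ae_hcube2 d n₁ n₂] with p hp
    rw [← ENNReal.ofReal_natCast, ← ENNReal.ofReal_mul (by positivity)]
    exact ENNReal.ofReal_le_ofReal (LMBM_le_bound _ _ _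
      (fun i j => dist_hcube _ _ (hp.1 i) (hp.2 j)) (by positivity))
  refine ne_top_of_le_ne_top ?_ h1
  rw [PE2_count r (unifCube d) (fun n₁ _ => (n₁ : ℝ≥0∞) * ENNReal.ofReal (Real.sqrt d))]
  simp only [ENNReal.tsum_mul_right, pw_sum hr, one_mul, ← mul_assoc, pw_mean hr]
  exact ENNReal.mul_ne_top ENNReal.ofReal_ne_top ENNReal.ofReal_ne_top

lemma MP_eq (d : ℕ) (r : ℝ) (hr : 0 ≤ r) : MP d r = (PE2 r (unifCube d) (LF d)).toReal := by
  have hfin := PE2_LF_ne_top d r hr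
  unfold PE2 at hfin ⊢
  have h1 := ENNReal.ne_top_of_tsum_ne_top hfin
  rw [ENNReal.tsum_toReal_eq h1]
  unfold MP
  congr 1; funext n₁
  rw [ENNReal.tsum_toReal_eq (ENNReal.ne_top_of_tsum_ne_top (h1 n₁))]
  congr 1; funext n₂
  rw [ENNReal.toReal_mul, ENNReal.toReal_mul]
  unfold pw
  rw [ENNReal.toReal_ofReal (by positivity), ENNReal.toReal_ofReal (by positivity)]
  congr 2
  rw [integral_eq_lintegral_of_nonneg_ae (Eventually.of_forall fun p => LMBM_nonneg _ _)
    measurable_LMBM.aestronglyMeasurable]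
  rfl

open Classical in
lemma pointwise {d : ℕ} (m : ℕ) (hm : 1 ≤ m) (J : ℕ) (hJ : m ≤ 2 ^ J) (n₁ n₂ : ℕ)
    (X : Fin n₁ → EuclideanSpace ℝ (Fin d))
    (Y : Fin n₂ → EuclideanSpace ℝ (Fin d)) (hX : ∀ i, X i ∈ hcube d) (hY : ∀ i, Y i ∈ hcube d) :
    LF d n₁ n₂ X Y ≤ ∑ b ∈ bx d m 0, thin (cell d m 0 b) (LF d) n₁ n₂ X Y +
      ∑ j ∈ Finset.range J, ENNReal.ofReal (Real.sqrt d * (2 ^ j / m)) *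
        ∑ b ∈ bx d m j, thin (cell d m j b) (AD d) n₁ n₂ X Y := by
  have e : ∀ (j : ℕ) (b : Fin d → ℕ) {n : ℕ} (Z : Fin n → EuclideanSpace ℝ (Fin d)),
      (∀ i, Z i ∈ hcube d) → Finset.univ.filter (fun a => Z a ∈ cell d m j b) =
      Finset.univ.filter (fun a => idx m j (Z a) = b) := by
    intro j b n Z hZ
    refine Finset.filter_congr fun a _ => ?_
    exact mem_cell_iff hm b (Z a) (fun i => (hZ a i).1)
  have h := LMBM_le_levels m hm X Y hX hY J hJ
  refine (ENNReal.ofReal_le_ofReal h).trans ?_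
  refine ENNReal.ofReal_add_le.trans (add_le_add ?_ ?_)
  · unfold VV
    rw [ENNReal.ofReal_sum_of_nonneg (fun b _ => LMBMon_nonneg _ _ _ _)]
    refine Finset.sum_le_sum fun b _ => ?_
    unfold thin LF
    apply ENNReal.ofReal_le_ofReal
    rw [e 0 b X hX, e 0 b Y hY]
    exact LMBMon_le_LMBM_rs _ _ _ _
  · rw [ENNReal.ofReal_sum_of_nonneg (fun j _ => mul_nonneg (by positivity)
      (Finset.sum_nonneg fun b _ => abs_nonneg _))]
    refine Finset.sum_le_sum fun j _ => ?_
    rw [ENNReal.ofReal_mul (by positivity), ENNReal.ofReal_sum_of_nonneg (fun b _ => abs_nonneg _)]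
    refine mul_le_mul' le_rfl (Finset.sum_le_sum fun b _ => ?_)
    unfold thin AD
    rw [e j b X hX, e j b Y hY]

lemma PE2_box (d m : ℕ) (hm : 1 ≤ m) (N : ℝ) (hN : 0 < N) (b : Fin d → ℕ) (hb : b ∈ bx d m 0) :
    PE2 ((m : ℝ) ^ d * N) (unifCube d) (thin (cell d m 0 b) (LF d)) ≤
      ENNReal.ofReal ((m : ℝ)⁻¹) * PE2 N (unifCube d) (LF d) := by
  have hm' : (1 : ℝ) ≤ m := by exact_mod_cast hm
  have hT := measurable_TT d m b
  have : IsProbabilityMeasure ((unifCube d).map (TT d m b)) :=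
    Measure.isProbabilityMeasure_map hT.aemeasurable
  rw [PE2_thin (unifCube d) ((unifCube d).map (TT d m b)) _ (measurable_cell d m 0 b)
    (((m : ℝ)⁻¹) ^ d) (by positivity) (pow_le_one₀ (by positivity) (inv_le_one_of_one_le₀ hm'))
    (restrict_cell d m hm b hb) (LF_meas d) _ (by positivity), PE2_map _ _ _ hT (LF_meas d),
    ← PE2_const_mul _ _ (LF_meas d)]
  have e : (m : ℝ) ^ d * N * (m : ℝ)⁻¹ ^ d = N := by
    rw [mul_right_comm, ← mul_pow, mul_inv_cancel₀ (by positivity)]; simp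
  rw [e]
  refine PE2_mono _ _ fun n₁ n₂ => Eventually.of_forall fun p => ?_
  unfold LF
  rw [← ENNReal.ofReal_mul (by positivity)]
  exact ENNReal.ofReal_le_ofReal (LMBM_scale _ _ _ _ _ fun i j => dist_TT d m b _ _)

lemma card_bx (d m j : ℕ) : (bx d m j).card = ((m - 1) / 2 ^ j + 1) ^ d := by
  unfold bx; simp

lemma PE2_main (d m : ℕ) (hm : 1 ≤ m) (N : ℝ) (hN : 0 < N) (J : ℕ) (hJ : m ≤ 2 ^ J) :
    PE2 ((m : ℝ) ^ d * N) (unifCube d) (LF d) ≤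
      ((bx d m 0).card : ℝ≥0∞) * (ENNReal.ofReal ((m : ℝ)⁻¹) * PE2 N (unifCube d) (LF d)) +
      ∑ j ∈ Finset.range J, ENNReal.ofReal (Real.sqrt d * (2 ^ j / m)) *
        (((bx d m j).card : ℝ≥0∞) * ENNReal.ofReal (Real.sqrt (2 * N * (2 ^ j) ^ d))) := by
  have hm' : (0 : ℝ) < m := by exact_mod_cast hm
  have hmeas : ∀ j, Meas2 (fun n₁ n₂ X Y => ∑ b ∈ bx d m j, thin (cell d m j b) (AD d) n₁ n₂ X Y) :=
    fun j n₁ n₂ => Finset.measurable_sum _ fun b _ => (AD_meas d).thin (measurable_cell d m j b) n₁ n₂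
  calc PE2 ((m : ℝ) ^ d * N) (unifCube d) (LF d)
      ≤ PE2 ((m : ℝ) ^ d * N) (unifCube d) (fun n₁ n₂ X Y =>
        ∑ b ∈ bx d m 0, thin (cell d m 0 b) (LF d) n₁ n₂ X Y +
        ∑ j ∈ Finset.range J, ENNReal.ofReal (Real.sqrt d * (2 ^ j / m)) *
        ∑ b ∈ bx d m j, thin (cell d m j b) (AD d) n₁ n₂ X Y) := by
        refine PE2_mono _ _ fun n₁ n₂ => ?_
        filter_upwards [ae_hcube2 d n₁ n₂] with p hp
        exact pointwise m hm J hJ n₁ n₂ _ _ hp.1 hp.2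
    _ = ∑ b ∈ bx d m 0, PE2 ((m : ℝ) ^ d * N) (unifCube d) (thin (cell d m 0 b) (LF d)) +
        ∑ j ∈ Finset.range J, ENNReal.ofReal (Real.sqrt d * (2 ^ j / m)) *
        ∑ b ∈ bx d m j, PE2 ((m : ℝ) ^ d * N) (unifCube d) (thin (cell d m j b) (AD d)) := by
        rw [PE2_add _ _ (fun n₁ n₂ => Finset.measurable_sum _ fun b _ =>
          (LF_meas d).thin (measurable_cell d m 0 b) n₁ n₂)]
        rw [PE2_sum _ _ _ (fun b => thin (cell d m 0 b) (LF d))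
          (fun b => (LF_meas d).thin (measurable_cell d m 0 b))]
        rw [PE2_sum _ _ _ (fun j n₁ n₂ X Y => ENNReal.ofReal (Real.sqrt d * (2 ^ j / m)) *
          ∑ b ∈ bx d m j, thin (cell d m j b) (AD d) n₁ n₂ X Y)
          (fun j n₁ n₂ => (hmeas j n₁ n₂).const_mul _)]
        congr 1
        refine Finset.sum_congr rfl fun j _ => ?_
        rw [PE2_const_mul _ _ (hmeas j), PE2_sum _ _ _ (fun b => thin (cell d m j b) (AD d))
          (fun b => (AD_meas d).thin (measurable_cell d m j b))]
    _ ≤ _ := by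
        refine add_le_add ?_ (Finset.sum_le_sum fun j _ => mul_le_mul' le_rfl ?_)
        · rw [← nsmul_eq_mul]
          exact Finset.sum_le_card_nsmul _ _ _ fun b hb => PE2_box d m hm N hN b hb
        · rw [← nsmul_eq_mul]
          refine Finset.sum_le_card_nsmul _ _ _ fun b hb => ?_
          refine PE2_absdiff _ (by positivity) _ _ (measurable_cell d m j b) _ (by positivity)
            ((2 ^ j / m) ^ d) (by positivity) (unif_cell_le d m j b) (le_of_eq ?_)
          rw [Real.sq_sqrt (by positivity), div_pow]
          field_simp

lemma MP_main (d m : ℕ) (hm : 1 ≤ m) (N : ℝ) (hN : 0 < N) (J : ℕ) (hJ : m ≤ 2 ^ J) :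
    MP d ((m : ℝ) ^ d * N) ≤ (m : ℝ) ^ d * ((m : ℝ)⁻¹ * MP d N) +
      ∑ j ∈ Finset.range J, (Real.sqrt d * (2 ^ j / m)) *
        (((bx d m j).card : ℝ) * Real.sqrt (2 * N * (2 ^ j) ^ d)) := by
  have h := PE2_main d m hm N hN J hJ
  have hMP : 0 ≤ MP d N := by rw [MP_eq d N hN.le]; exact ENNReal.toReal_nonneg
  have h0 : PE2 N (unifCube d) (LF d) = ENNReal.ofReal (MP d N) := by
    rw [MP_eq d N hN.le, ENNReal.ofReal_toReal (PE2_LF_ne_top d N hN.le)]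
  rw [h0] at h
  have e : ((bx d m 0).card : ℝ≥0∞) * (ENNReal.ofReal ((m : ℝ)⁻¹) * ENNReal.ofReal (MP d N)) +
      ∑ j ∈ Finset.range J, ENNReal.ofReal (Real.sqrt d * (2 ^ j / m)) *
        (((bx d m j).card : ℝ≥0∞) * ENNReal.ofReal (Real.sqrt (2 * N * (2 ^ j) ^ d)))
      = ENNReal.ofReal ((m : ℝ) ^ d * ((m : ℝ)⁻¹ * MP d N) +
      ∑ j ∈ Finset.range J, (Real.sqrt d * (2 ^ j / m)) *
        (((bx d m j).card : ℝ) * Real.sqrt (2 * N * (2 ^ j) ^ d))) := by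
    rw [ENNReal.ofReal_add (by positivity) (by positivity),
      ENNReal.ofReal_sum_of_nonneg (fun j _ => by positivity)]
    congr 1
    · rw [ENNReal.ofReal_mul (by positivity), ENNReal.ofReal_mul (by positivity), card_bx,
        ← ENNReal.ofReal_natCast]
      congr 2
      have : (m - 1) / 2 ^ 0 + 1 = m := by simp; omega
      rw [this]; push_cast; rfl
    · refine Finset.sum_congr rfl fun j _ => ?_
      rw [ENNReal.ofReal_mul (p := Real.sqrt d * (2 ^ j / m)) (q := ((bx d m j).card : ℝ) *
        Real.sqrt (2 * N * (2 ^ j) ^ d)) (by positivity), ENNReal.ofReal_mul (Nat.cast_nonneg _),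
        ENNReal.ofReal_natCast]
  rw [e] at h
  rw [MP_eq d _ (by positivity)]
  exact ENNReal.toReal_le_of_le_ofReal (by positivity) h

/-- For `d ≥ 3`, the normalized Poissonized mean matching length satisfies
`M(m^d N)/(m^d N)^{1−1/d} ≤ M(N)/N^{1−1/d} + C_d / N^{1/2−1/d}` where
`C_d = 2^d √(2d) ∑_{k=0}^∞ 2^{−k(d/2−1)}` is a finite constant depending only on `d`. -/
theorem MP_normalized_subadditive
    (d : ℕ) (hd : 3 ≤ d) (m : ℕ) (hm : 1 ≤ m) (N : ℝ) (hN : 0 < N) :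
    Summable (fun k : ℕ => (2 : ℝ) ^ (-(k : ℝ) * ((d : ℝ) / 2 - 1))) ∧
    MP d ((m : ℝ) ^ d * N) / ((m : ℝ) ^ d * N) ^ (1 - 1 / (d : ℝ)) ≤
      MP d N / N ^ (1 - 1 / (d : ℝ)) +
        (2 ^ d * Real.sqrt (2 * d) *
            ∑' k : ℕ, (2 : ℝ) ^ (-(k : ℝ) * ((d : ℝ) / 2 - 1))) /
          N ^ (1 / 2 - 1 / (d : ℝ)) := by
  have hd' : (3 : ℝ) ≤ d := by exact_mod_cast hd
  have hm' : (0 : ℝ) < m := by exact_mod_cast hm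
  have hsum : Summable (fun k : ℕ => (2 : ℝ) ^ (-(k : ℝ) * ((d : ℝ) / 2 - 1))) := by
    have : (fun k : ℕ => (2 : ℝ) ^ (-(k : ℝ) * ((d : ℝ) / 2 - 1)))
        = fun k : ℕ => ((2 : ℝ) ^ (-((d : ℝ) / 2 - 1))) ^ k := by
      funext k
      rw [← Real.rpow_natCast, ← Real.rpow_mul (by norm_num)]
      congr 1; ring
    rw [this]
    refine summable_geometric_of_lt_one (by positivity) ?_
    exact Real.rpow_lt_one_of_one_lt_of_neg (by norm_num) (by linarith)
  refine ⟨hsum, ?_⟩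
  set J := Nat.clog 2 m with hJdef
  have hJ : m ≤ 2 ^ J := Nat.le_pow_clog (by norm_num) m
  have hlt : ∀ j < J, 2 ^ j < m := fun j hj => (Nat.lt_clog_iff_pow_lt (by norm_num)).1 hj
  have hmain := MP_main d m hm N hN J hJ
  set P := (m : ℝ) ^ d * (m : ℝ)⁻¹ with hP
  have hPpos : 0 < P := by positivity
  have hterm : ∀ j < J, (Real.sqrt d * (2 ^ j / m)) *
        (((bx d m j).card : ℝ) * Real.sqrt (2 * N * (2 ^ j) ^ d)) ≤
      P * (Real.sqrt N * (2 ^ d * Real.sqrt (2 * d) * (2 : ℝ) ^ (-(j : ℝ) * ((d : ℝ) / 2 - 1)))) := by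
    intro j hj
    have hc : ((bx d m j).card : ℝ) ≤ (2 * m / 2 ^ j) ^ d := by
      rw [card_bx]
      push_cast
      have h1 : ((((m - 1) / 2 ^ j : ℕ) : ℝ) + 1) ≤ 2 * m / 2 ^ j := by
        rw [le_div_iff₀ (by positivity)]
        have h2 := Nat.div_mul_le_self (m - 1) (2 ^ j)
        have h3 := hlt j hj
        have : ((m - 1) / 2 ^ j + 1) * 2 ^ j ≤ 2 * m := by
          rw [add_mul]; omega
        exact_mod_cast this
      gcongr
    have hs1 : Real.sqrt (2 * N * (2 ^ j) ^ d) = Real.sqrt 2 * Real.sqrt N * (2 : ℝ) ^ ((j : ℝ) * d / 2) := by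
      rw [Real.sqrt_mul (by positivity), Real.sqrt_mul (by positivity)]
      congr 1
      rw [Real.sqrt_eq_rpow, ← pow_mul, ← Real.rpow_natCast, ← Real.rpow_mul (by norm_num)]
      congr 1; push_cast; ring
    have hs2 : Real.sqrt (2 * d) = Real.sqrt 2 * Real.sqrt d := Real.sqrt_mul (by norm_num) _
    have hs3 : (2 : ℝ) ^ (-(j : ℝ) * ((d : ℝ) / 2 - 1)) * (2 ^ j) ^ d
        = 2 ^ j * (2 : ℝ) ^ ((j : ℝ) * d / 2) := by
      rw [← pow_mul, ← Real.rpow_natCast 2 (j * d), ← Real.rpow_natCast 2 j,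
        ← Real.rpow_add (by norm_num), ← Real.rpow_add (by norm_num)]
      congr 1; push_cast; ring
    calc _ ≤ (Real.sqrt d * (2 ^ j / m)) *
        ((2 * m / 2 ^ j) ^ d * Real.sqrt (2 * N * (2 ^ j) ^ d)) := by gcongr
      _ = P * (Real.sqrt N * (2 ^ d * Real.sqrt (2 * d) * (2 : ℝ) ^ (-(j : ℝ) * ((d : ℝ) / 2 - 1)))) := by
        rw [hs1, hs2, hP, div_pow, mul_pow]
        have h4 : (2 : ℝ) ^ (-(j : ℝ) * ((d : ℝ) / 2 - 1)) =
          2 ^ j * (2 : ℝ) ^ ((j : ℝ) * d / 2) / (2 ^ j) ^ d := by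
          rw [← hs3]; field_simp
        rw [h4]
        ring
  set C := 2 ^ d * Real.sqrt (2 * d) * ∑' k : ℕ, (2 : ℝ) ^ (-(k : ℝ) * ((d : ℝ) / 2 - 1)) with hC
  have hbound : MP d ((m : ℝ) ^ d * N) ≤ P * (MP d N + Real.sqrt N * C) := by
    refine hmain.trans ?_
    have : ∑ j ∈ Finset.range J, (Real.sqrt d * (2 ^ j / m)) *
        (((bx d m j).card : ℝ) * Real.sqrt (2 * N * (2 ^ j) ^ d)) ≤ P * (Real.sqrt N * C) := by
      refine (Finset.sum_le_sum fun j hj => hterm j (Finset.mem_range.1 hj)).trans ?_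
      rw [← Finset.mul_sum, ← Finset.mul_sum, ← Finset.mul_sum]
      have := hsum.sum_le_tsum (Finset.range J) (fun k _ => by positivity)
      rw [hC]
      gcongr
    calc _ ≤ (m : ℝ) ^ d * ((m : ℝ)⁻¹ * MP d N) + P * (Real.sqrt N * C) := by gcongr
      _ = _ := by rw [hP]; ring
  have hden : ((m : ℝ) ^ d * N) ^ (1 - 1 / (d : ℝ)) = P * N ^ (1 - 1 / (d : ℝ)) := by
    rw [Real.mul_rpow (by positivity) hN.le]
    congr 1
    rw [hP, ← Real.rpow_natCast, ← Real.rpow_mul hm'.le, ← Real.rpow_neg_one (m : ℝ),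
      ← Real.rpow_add hm']
    congr 1
    field_simp
    ring
  have hN1 : N ^ (1 - 1 / (d : ℝ)) = Real.sqrt N * N ^ (1 / 2 - 1 / (d : ℝ)) := by
    rw [Real.sqrt_eq_rpow, ← Real.rpow_add hN]
    congr 1; ring
  have hNpos : 0 < N ^ (1 - 1 / (d : ℝ)) := by positivity
  rw [hden]
  calc MP d ((m : ℝ) ^ d * N) / (P * N ^ (1 - 1 / (d : ℝ)))
      ≤ P * (MP d N + Real.sqrt N * C) / (P * N ^ (1 - 1 / (d : ℝ))) := by gcongr
    _ = MP d N / N ^ (1 - 1 / (d : ℝ)) + Real.sqrt N * C / N ^ (1 - 1 / (d : ℝ)) := by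
        rw [mul_div_mul_left _ _ hPpos.ne', add_div]
    _ = _ := by
        congr 1
        have hsq : Real.sqrt N ≠ 0 := (Real.sqrt_pos.2 hN).ne'
        rw [hN1, mul_div_mul_left _ _ hsq]
end

section
/- Let f : (0,∞) → ℝ be continuous and nonnegative, let C > 0 and α > 0, and suppose that f(m t) ≤ f(t) + C / t^{α} for every real t > 0 and every positive integer m. Then f(t) converges to a finite limit as t → ∞. -/
open Filter

/-- If `f : (0,∞) → ℝ` is continuous and nonnegative and satisfies
`f(mt) ≤ f(t) + C/t^α` for all `t > 0` and all positive integers `m`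
(with constants `C > 0`, `α > 0`), then `f(t)` converges to a finite limit
as `t → ∞`. -/
theorem tendsto_of_approximate_subadditivity
    (f : ℝ → ℝ) (C α : ℝ) (hC : 0 < C) (hα : 0 < α)
    (hcont : ContinuousOn f (Set.Ioi 0))
    (hnonneg : ∀ t : ℝ, 0 < t → 0 ≤ f t)
    (hsub : ∀ t : ℝ, 0 < t → ∀ m : ℕ, 0 < m → f (m * t) ≤ f t + C / t ^ α) :
    ∃ L : ℝ, Tendsto f atTop (nhds L) := by
  have key : ∀ t0 : ℝ, 0 < t0 → ∀ K : ℝ, f t0 + C / t0 ^ α < K → ∀ᶠ t in atTop, f t ≤ K := by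
    intro t0 ht0 K hK
    have h1 : Tendsto (fun t : ℝ => t / t0) atTop atTop := tendsto_id.atTop_div_const ht0
    have h2 : Tendsto (fun t : ℝ => ((⌊t / t0⌋₊ : ℝ) / (t / t0))) atTop (nhds 1) :=
      (tendsto_nat_floor_div_atTop (R := ℝ)).comp h1
    have h3 : Tendsto (fun t : ℝ => t0 * ((⌊t / t0⌋₊ : ℝ) / (t / t0))⁻¹) atTop (nhds t0) := by
      simpa using (h2.inv₀ one_ne_zero).const_mul t0
    have hg : ContinuousAt (fun s : ℝ => f s + C / s ^ α) t0 := by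
      refine (hcont.continuousAt (Ioi_mem_nhds ht0)).add ?_
      exact continuousAt_const.div (Real.continuousAt_rpow_const _ _ (Or.inl ht0.ne'))
        (Real.rpow_pos_of_pos ht0 α).ne'
    have h4 := (hg.tendsto.comp h3).eventually_lt_const hK
    filter_upwards [h4, eventually_ge_atTop t0] with t ht htt
    have hm : 0 < ⌊t / t0⌋₊ := Nat.floor_pos.2 ((one_le_div ht0).2 htt)
    have hm' : (0 : ℝ) < (⌊t / t0⌋₊ : ℝ) := by exact_mod_cast hm
    have htp : 0 < t := ht0.trans_le htt
    have h5 := hsub (t0 * ((⌊t / t0⌋₊ : ℝ) / (t / t0))⁻¹) (by positivity) _ hm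
    have h6 : (⌊t / t0⌋₊ : ℝ) * (t0 * ((⌊t / t0⌋₊ : ℝ) / (t / t0))⁻¹) = t := by
      generalize (⌊t / t0⌋₊ : ℝ) = m at *
      field_simp
    rw [h6] at h5
    exact h5.trans ht.le
  have hba : IsBoundedUnder (· ≤ ·) atTop f :=
    isBoundedUnder_of_eventually_le (key 1 one_pos _ (lt_add_one _))
  have hbb : IsBoundedUnder (· ≥ ·) atTop f :=
    isBoundedUnder_of_eventually_ge (a := 0)
      ((eventually_gt_atTop 0).mono fun t ht => hnonneg t ht)
  have hls : ∀ t0 : ℝ, 0 < t0 → limsup f atTop ≤ f t0 + C / t0 ^ α := fun t0 ht0 =>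
    le_of_forall_gt_imp_ge_of_dense fun K hK =>
      limsup_le_of_le hbb.isCoboundedUnder_le (key t0 ht0 K hK)
  have h0 : Tendsto (fun t : ℝ => C / t ^ α) atTop (nhds 0) :=
    (tendsto_rpow_atTop hα).const_div_atTop C
  refine ⟨limsup f atTop, tendsto_of_le_liminf_of_limsup_le ?_ le_rfl hba hbb⟩
  refine le_of_forall_pos_le_add fun ε hε => ?_
  rw [← sub_le_iff_le_add]
  refine le_liminf_of_le hba.isCoboundedUnder_ge ?_
  filter_upwards [h0.eventually_lt_const hε, eventually_gt_atTop 0] with t h1 h2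
  linarith [hls t h2]
end

section
/- Let d ≥ 3 and let M(N) be the expected minimum bipartite matching length in the Poissonized model on [0,1]^d with intensity N. Then there is a constant β_MBM(d) such that M(N)/N^{1−1/d} → β_MBM(d) as N → ∞; equivalently, E L_MBM(X₁,…,X_{N₁}; Y₁,…,Y_{N₂}) ∼ β_MBM(d) · N^{1−1/d} as N → ∞ when N₁ and N₂ are independent Poisson(N) variables and all points are i.i.d. uniform in [0,1]^d. -/
open MeasureTheory ProbabilityTheory Filter

set_option linter.all false
open scoped ENNReal

namespace MBM

section general
variable {E : Type*} [MeasurableSpace E]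

/-- multiset of values -/
def ms {E : Type*} {ι : Type*} [Fintype ι] (x : ι → E) : Multiset E := Finset.univ.val.map x

lemma ms_comp_equiv {ι κ : Type*} [Fintype ι] [Fintype κ] (e : ι ≃ κ) (x : κ → E) :
    ms (x ∘ e) = ms x := by
  classical
  unfold ms
  rw [← Multiset.map_map]
  congr 1
  have := congrArg Finset.val (Finset.map_univ_equiv e)
  simpa using this

lemma ms_sum {ι κ : Type*} [Fintype ι] [Fintype κ] (f : ι → E) (g : κ → E) :
    ms (Sum.elim f g) = ms f + ms g := by
  unfold ms
  rw [← Finset.univ_disjSum_univ, Finset.val_disjSum, Multiset.disjSum, Multiset.map_add,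
    Multiset.map_map, Multiset.map_map]
  rfl

lemma card_ms {ι : Type*} [Fintype ι] (x : ι → E) : (ms x).card = Fintype.card ι := by
  simp [ms]

lemma exists_ms (S : Multiset E) : ∃ (n : ℕ) (x : Fin n → E), S = ms x := by
  induction S using Quotient.inductionOn with
  | _ l =>
    refine ⟨l.length, l.get, ?_⟩
    have : (Finset.univ.val : Multiset (Fin l.length)) = (List.finRange l.length : Multiset _) := rfl
    unfold ms
    rw [this, Multiset.map_coe]
    simp

/-- measurability of functionals -/
def MF (F : Multiset E → ℝ≥0∞) : Prop := ∀ n, Measurable fun x : Fin n → E => F (ms x)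

/-- Poisson expectation -/
noncomputable def Po (ν : Measure E) (F : Multiset E → ℝ≥0∞) : ℝ≥0∞ :=
  ∑' n : ℕ, ENNReal.ofReal (Real.exp (-(ν Set.univ).toReal) / n.factorial) *
    ∫⁻ x : Fin n → E, F (ms x) ∂(Measure.pi fun _ => ν)

lemma MF.measurable {F : Multiset E → ℝ≥0∞} (hF : MF F) {ι : Type*} [Fintype ι] :
    Measurable fun x : ι → E => F (ms x) := by
  have e := (Fintype.equivFin ι)
  have h := (hF (Fintype.card ι)).comp
    (show Measurable (fun (x : ι → E) => x ∘ e.symm) by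
      apply measurable_pi_lambda; intro i; exact measurable_pi_apply _)
  convert h using 2 with x
  simp only [Function.comp_apply, ms_comp_equiv]

lemma pow_weights (a : ℝ≥0∞) (ha : a ≠ ∞) (n : ℕ) :
    ENNReal.ofReal (Real.exp (-a.toReal) / n.factorial) * a ^ n =
      ENNReal.ofReal (Real.exp (-a.toReal) * a.toReal ^ n / n.factorial) := by
  conv_lhs => rw [← ENNReal.ofReal_toReal ha]
  rw [← ENNReal.ofReal_pow ENNReal.toReal_nonneg, ← ENNReal.ofReal_mul (by positivity)]
  simp only [ENNReal.toReal_ofReal ENNReal.toReal_nonneg]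
  congr 1; ring

lemma hasSum_pois (a : ℝ) : HasSum (fun n : ℕ => Real.exp (-a) * a ^ n / n.factorial) 1 := by
  have h := (NormedSpace.expSeries_div_hasSum_exp (𝔸 := ℝ) a).mul_left (Real.exp (-a))
  rw [← Real.exp_eq_exp_ℝ, ← Real.exp_add] at h
  simpa [mul_div_assoc] using h

lemma Po_card (ν : Measure E) [IsFiniteMeasure ν] (g : ℕ → ℝ≥0∞) :
    Po ν (fun S => g S.card) =
      ∑' n : ℕ, ENNReal.ofReal (Real.exp (-(ν Set.univ).toReal) * (ν Set.univ).toReal ^ n / n.factorial)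
        * g n := by
  unfold Po
  congr 1; ext n
  simp only [card_ms, Fintype.card_fin, lintegral_const, Measure.pi_univ, Finset.prod_const,
    Finset.card_univ]
  rw [← pow_weights _ (measure_ne_top _ _)]
  ring

lemma Po_const (ν : Measure E) [IsFiniteMeasure ν] (c : ℝ≥0∞) : Po ν (fun _ => c) = c := by
  rw [Po_card ν (fun _ => c), ENNReal.tsum_mul_right, ← ENNReal.ofReal_tsum_of_nonneg,
    (hasSum_pois _).tsum_eq]
  · simp
  · intro n; positivity
  · exact (hasSum_pois _).summable

lemma Po_mono (ν : Measure E) [IsFiniteMeasure ν] {A : Set E} (hA : ∀ᵐ x ∂ν, x ∈ A)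
    {F G : Multiset E → ℝ≥0∞} (h : ∀ S : Multiset E, (∀ x ∈ S, x ∈ A) → F S ≤ G S) :
    Po ν F ≤ Po ν G := by
  unfold Po
  refine ENNReal.tsum_le_tsum fun n => ?_
  gcongr 1
  refine lintegral_mono_ae ?_
  have : ∀ᵐ x ∂(Measure.pi fun _ : Fin n => ν), ∀ i, x i ∈ A := by
    rw [Filter.eventually_all]
    intro i
    exact Measure.tendsto_eval_ae_ae.eventually hA
  filter_upwards [this] with x hx
  apply h
  intro y hy
  simp only [ms, Multiset.mem_map] at hy
  obtain ⟨i, -, rfl⟩ := hy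
  exact hx i

lemma Po_add (ν : Measure E) {F G : Multiset E → ℝ≥0∞} (hG : MF G) :
    Po ν (fun S => F S + G S) = Po ν F + Po ν G := by
  unfold Po
  rw [← ENNReal.tsum_add]
  congr 1; ext n
  rw [lintegral_add_right _ (hG n), mul_add]

lemma MF_const (c : ℝ≥0∞) : MF (fun _ : Multiset E => c) := fun _ => measurable_const

lemma MF_card (g : ℕ → ℝ≥0∞) : MF (fun S : Multiset E => g S.card) := fun n => by
  simp only [card_ms]; exact measurable_const

lemma Po_const_mul (ν : Measure E) {F : Multiset E → ℝ≥0∞} (c : ℝ≥0∞) (hc : c ≠ ∞) :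
    Po ν (fun S => c * F S) = c * Po ν F := by
  unfold Po
  rw [← ENNReal.tsum_mul_left]
  congr 1; ext n
  rw [lintegral_const_mul' _ _ hc]; ring

lemma Po_meas (ν : Measure E) [IsFiniteMeasure ν] {α : Type*} [MeasurableSpace α]
    (F : α → Multiset E → ℝ≥0∞)
    (hF : ∀ n, Measurable fun p : α × (Fin n → E) => F p.1 (ms p.2)) :
    Measurable fun a => Po ν (F a) := by
  unfold Po
  refine Measurable.tsum fun n => ?_
  exact (Measurable.lintegral_prod_right' (hF n)).const_mul _

lemma pi_sum {ι κ : Type*} [Fintype ι] [DecidableEq ι] [Fintype κ] {X : Type*} [MeasurableSpace X] (ν : κ → Measure X)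
    [∀ k, IsFiniteMeasure (ν k)] :
    Measure.pi (fun _ : ι => ∑ k, ν k) = ∑ c : ι → κ, Measure.pi (fun i => ν (c i)) := by
  classical
  refine Measure.pi_eq fun s hs => ?_
  simp only [Measure.coe_finsetSum, Finset.sum_apply, Measure.pi_pi]
  rw [Finset.prod_univ_sum]
  simp

lemma lint_reindex (ν : Measure E) [IsFiniteMeasure ν] {ι κ : Type*} [Fintype ι] [Fintype κ]
    (e : ι ≃ κ) {F : Multiset E → ℝ≥0∞} :
    ∫⁻ x : ι → E, F (ms x) ∂(Measure.pi fun _ => ν) =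
      ∫⁻ x : κ → E, F (ms x) ∂(Measure.pi fun _ => ν) := by
  have h := measurePreserving_piCongrLeft (α := fun _ : ι => E) (fun _ => ν) e.symm
  rw [← h.lintegral_comp_emb (MeasurableEquiv.measurableEmbedding _)]
  congr 1; ext x
  congr 1
  rw [← ms_comp_equiv e.symm]
  congr 1
  ext i
  exact Equiv.piCongrLeft_apply_apply (fun _ => E) e.symm x i

lemma lint_type (ν : Bool → Measure E) [∀ b, IsFiniteMeasure (ν b)] {ι : Type*} [Fintype ι]
    (c : ι → Bool) {F : Multiset E → ℝ≥0∞} (hF : MF F) (k l : ℕ)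
    (hk : Fintype.card {i // c i = true} = k) (hl : Fintype.card {i // ¬ c i = true} = l) :
    ∫⁻ x : ι → E, F (ms x) ∂(Measure.pi fun i => ν (c i)) =
      ∫⁻ x : Fin k → E, ∫⁻ y : Fin l → E, F (ms x + ms y) ∂(Measure.pi fun _ => ν false)
        ∂(Measure.pi fun _ => ν true) := by
  classical
  have h := measurePreserving_piEquivPiSubtypeProd (fun i => ν (c i)) (fun i => c i = true)
  have key : ∀ x : ι → E, F (ms x) =
      (fun p : ({i // c i = true} → E) × ({i // ¬ c i = true} → E) => F (ms p.1 + ms p.2))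
        (MeasurableEquiv.piEquivPiSubtypeProd (fun _ => E) (fun i => c i = true) x) := by
    intro x
    dsimp only
    congr 1
    have h1 : ms x = ms (x ∘ (Equiv.sumCompl (fun i => c i = true))) := (ms_comp_equiv _ _).symm
    rw [h1]
    rw [← ms_sum]
    congr 1
    ext i
    cases i <;> rfl
  have hm : Measurable (fun p : ({i // c i = true} → E) × ({i // ¬ c i = true} → E) =>
      F (ms p.1 + ms p.2)) := by
    have : (fun p : ({i // c i = true} → E) × ({i // ¬ c i = true} → E) =>
      F (ms p.1 + ms p.2)) = fun p => F (ms (Sum.elim p.1 p.2)) := by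
      ext p; rw [ms_sum]
    rw [this]
    refine hF.measurable.comp (measurable_pi_lambda _ fun i => ?_)
    cases i with
    | inl i => exact (measurable_pi_apply i).comp measurable_fst
    | inr i => exact (measurable_pi_apply i).comp measurable_snd
  rw [lintegral_congr key, h.lintegral_comp hm, lintegral_prod _ hm.aemeasurable]
  have e1 : (fun i : {i // c i = true} => ν (c i)) = fun _ => ν true := by
    ext1 i; rw [i.2]
  have e2 : (fun i : {i // ¬ c i = true} => ν (c i)) = fun _ => ν false := by
    ext1 i; rw [Bool.eq_false_of_not_eq_true i.2]
  rw [e1, e2]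
  dsimp only
  rw [lint_reindex (ν true) (Fintype.equivFinOfCardEq hk)
    (F := fun S => ∫⁻ y : {i // ¬ c i = true} → E, F (S + ms y) ∂(Measure.pi fun _ => ν false))]
  congr 1; ext x
  rw [lint_reindex (ν false) (Fintype.equivFinOfCardEq hl) (F := fun T => F (ms x + T))]

lemma sum_bool_fun (n : ℕ) (g : ℕ → ℕ → ℝ≥0∞) :
    ∑ c : Fin n → Bool, g (Fintype.card {i // c i = true}) (Fintype.card {i // ¬ c i = true}) =
      ∑ p ∈ Finset.HasAntidiagonal.antidiagonal n, (n.choose p.1 : ℝ≥0∞) * g p.1 p.2 := by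
  classical
  have h1 : ∑ c : Fin n → Bool, g (Fintype.card {i // c i = true}) (Fintype.card {i // ¬ c i = true})
      = ∑ s ∈ (Finset.univ : Finset (Fin n)).powerset, (fun k => g k (n - k)) s.card := by
    refine Finset.sum_bij' (fun c _ => Finset.univ.filter (fun i => c i = true))
      (fun s _ => fun i => decide (i ∈ s)) ?_ ?_ ?_ ?_ ?_
    · simp
    · simp
    · intro c _; ext i; simp
    · intro c _; ext i; simp
    · intro c _
      have : Fintype.card {i // ¬ c i = true} = n - Fintype.card {i // c i = true} := by
        rw [Fintype.card_subtype_compl, Fintype.card_fin]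
      rw [this]
      simp only [Fintype.card_subtype]
  rw [h1, Finset.sum_powerset_apply_card (fun k => g k (n - k)), Finset.Nat.sum_antidiagonal_eq_sum_range_succ_mk]
  simp

lemma lint_add_measure (ν₁ ν₂ : Measure E) [IsFiniteMeasure ν₁] [IsFiniteMeasure ν₂] (n : ℕ)
    {F : Multiset E → ℝ≥0∞} (hF : MF F) :
    ∫⁻ x : Fin n → E, F (ms x) ∂(Measure.pi fun _ => ν₁ + ν₂) =
      ∑ p ∈ Finset.HasAntidiagonal.antidiagonal n, (n.choose p.1 : ℝ≥0∞) *
        ∫⁻ x : Fin p.1 → E, ∫⁻ y : Fin p.2 → E, F (ms x + ms y) ∂(Measure.pi fun _ => ν₂)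
        ∂(Measure.pi fun _ => ν₁) := by
  let ν : Bool → Measure E := fun b => if b then ν₁ else ν₂
  have : ∀ b, IsFiniteMeasure (ν b) := by
    intro b; cases b <;> simp [ν] <;> infer_instance
  have h : (fun _ : Fin n => ν₁ + ν₂) = fun _ => ∑ b, ν b := by
    ext1 i; simp [ν]
  rw [h, pi_sum, lintegral_finsetSum_measure]
  rw [← sum_bool_fun n (fun k l => ∫⁻ x : Fin k → E, ∫⁻ y : Fin l → E, F (ms x + ms y)
    ∂(Measure.pi fun _ => ν₂) ∂(Measure.pi fun _ => ν₁))]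
  refine Finset.sum_congr rfl fun c _ => ?_
  rw [lint_type ν c hF _ _ rfl rfl]
  simp [ν]

lemma Po_add_measure (ν₁ ν₂ : Measure E) [IsFiniteMeasure ν₁] [IsFiniteMeasure ν₂]
    {F : Multiset E → ℝ≥0∞} (hF : MF F) :
    Po (ν₁ + ν₂) F = Po ν₁ (fun S => Po ν₂ (fun T => F (S + T))) := by
  unfold Po
  simp_rw [lint_add_measure ν₁ ν₂ _ hF]
  have hm : ∀ k l : ℕ, Measurable fun p : (Fin k → E) × (Fin l → E) => F (ms p.1 + ms p.2) := by
    intro k l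
    have : (fun p : (Fin k → E) × (Fin l → E) =>
      F (ms p.1 + ms p.2)) = fun p => F (ms (Sum.elim p.1 p.2)) := by
      ext p; rw [ms_sum]
    rw [this]
    refine hF.measurable.comp (measurable_pi_lambda _ fun i => ?_)
    cases i with
    | inl i => exact (measurable_pi_apply i).comp measurable_fst
    | inr i => exact (measurable_pi_apply i).comp measurable_snd
  have R : ∀ k : ℕ, ∫⁻ x : Fin k → E, (∑' l : ℕ, ENNReal.ofReal
      (Real.exp (-(ν₂ Set.univ).toReal) / l.factorial) * ∫⁻ y : Fin l → E, F (ms x + ms y)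
        ∂(Measure.pi fun _ => ν₂)) ∂(Measure.pi fun _ => ν₁) = 
      ∑' l : ℕ, ENNReal.ofReal (Real.exp (-(ν₂ Set.univ).toReal) / l.factorial) *
        ∫⁻ x : Fin k → E, ∫⁻ y : Fin l → E, F (ms x + ms y) ∂(Measure.pi fun _ => ν₂)
        ∂(Measure.pi fun _ => ν₁) := by
    intro k
    rw [lintegral_tsum]
    · congr 1; ext l
      rw [lintegral_const_mul' _ _ ENNReal.ofReal_ne_top]
    · intro l
      exact ((Measurable.lintegral_prod_right' (hm k l)).const_mul _).aemeasurable
  simp_rw [R]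
  set I : ℕ → ℕ → ℝ≥0∞ := fun k l => ∫⁻ x : Fin k → E, ∫⁻ y : Fin l → E, F (ms x + ms y)
    ∂(Measure.pi fun _ => ν₂) ∂(Measure.pi fun _ => ν₁) with hI
  set a := (ν₁ Set.univ).toReal
  set b := (ν₂ Set.univ).toReal
  have hab : ((ν₁ + ν₂) Set.univ).toReal = a + b := by
    rw [Measure.add_apply, ENNReal.toReal_add (measure_ne_top _ _) (measure_ne_top _ _)]
  rw [hab]
  change ∑' n : ℕ, ENNReal.ofReal (Real.exp (-(a+b)) / n.factorial) *
    ∑ p ∈ Finset.HasAntidiagonal.antidiagonal n, (n.choose p.1 : ℝ≥0∞) * I p.1 p.2 =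
    ∑' k : ℕ, ENNReal.ofReal (Real.exp (-a) / k.factorial) * ∑' l : ℕ,
      ENNReal.ofReal (Real.exp (-b) / l.factorial) * I k l
  simp_rw [← ENNReal.tsum_mul_left]
  rw [← ENNReal.tsum_prod, ← (Finset.HasAntidiagonal.sigmaAntidiagonalEquivProd (A := ℕ)).tsum_eq,
    ENNReal.tsum_sigma']
  congr 1; ext n
  rw [tsum_fintype, Finset.mul_sum, ← Finset.sum_coe_sort]
  refine Finset.sum_congr rfl fun p _ => ?_
  obtain ⟨⟨k, l⟩, hp⟩ := p
  have hn : k + l = n := by simpa using hp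
  subst hn
  simp only [Finset.HasAntidiagonal.sigmaAntidiagonalEquivProd_apply]
  rw [← mul_assoc, ← mul_assoc]
  congr 1
  rw [← ENNReal.ofReal_natCast, ← ENNReal.ofReal_mul (by positivity),
    ← ENNReal.ofReal_mul (by positivity)]
  congr 1
  have h1 : ((k + l).choose k : ℝ) * k.factorial * l.factorial = (k+l).factorial := by
    have := Nat.choose_mul_factorial_mul_factorial (Nat.le_add_right k l)
    rw [Nat.add_sub_cancel_left] at this
    exact_mod_cast this
  rw [← h1, neg_add, Real.exp_add]
  have : ((k + l).choose k : ℝ) ≠ 0 := by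
    exact_mod_cast (Nat.choose_pos (Nat.le_add_right k l)).ne'
  field_simp

lemma pi_smul' (ν : Measure E) [IsFiniteMeasure ν] (c : ℝ≥0∞) (hc : c ≠ ∞) (n : ℕ) :
    Measure.pi (fun _ : Fin n => c • ν) = c ^ n • Measure.pi (fun _ : Fin n => ν) := by
  have : IsFiniteMeasure (c • ν) := by
    refine ⟨?_⟩
    simpa using ENNReal.mul_lt_top hc.lt_top (measure_lt_top ν _)
  refine Measure.pi_eq fun s hs => ?_
  simp [Finset.prod_mul_distrib]

lemma Po_map (ν : Measure E) [IsFiniteMeasure ν] {φ : E → E} (hφ : Measurable φ)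
    {F : Multiset E → ℝ≥0∞} (hF : MF F) :
    Po (ν.map φ) F = Po ν (fun S => F (S.map φ)) := by
  unfold Po
  rw [Measure.map_apply hφ MeasurableSet.univ, Set.preimage_univ]
  congr 1; ext n
  congr 1
  rw [← Measure.pi_map_pi (fun _ => hφ.aemeasurable), lintegral_map (hF n) (by fun_prop)]
  congr 1; ext x
  simp [ms, Multiset.map_map, Function.comp_def]

end general


section matching
variable {E : Type*} [PseudoEMetricSpace E]

/-- matchings -/
def IsMat (S T : Multiset E) (P : Multiset (E × E)) : Prop :=
  P.map Prod.fst ≤ S ∧ P.map Prod.snd ≤ T ∧ P.card = min S.card T.card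

/-- cost of a matching -/
noncomputable def cost (P : Multiset (E × E)) : ℝ≥0∞ := (P.map fun p => edist p.1 p.2).sum

/-- minimal matching length of multisets -/
noncomputable def Lm (S T : Multiset E) : ℝ≥0∞ := ⨅ P : {P // IsMat S T P}, cost P.1

lemma Lm_le {S T : Multiset E} {P} (h : IsMat S T P) : Lm S T ≤ cost P :=
  iInf_le (fun P : {P // IsMat S T P} => cost P.1) ⟨P, h⟩

lemma exists_pair {U V : Multiset E} (h : U.card = V.card) :
    ∃ Q : Multiset (E × E), Q.map Prod.fst = U ∧ Q.map Prod.snd = V := by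
  induction U using Multiset.induction_on generalizing V with
  | empty =>
    have : V = 0 := by rw [← Multiset.card_eq_zero, ← h]; simp
    exact ⟨0, by simp, by simp [this]⟩
  | cons a U ih =>
    have hV : V ≠ 0 := by
      rintro rfl; simp at h
    obtain ⟨b, hb⟩ := Multiset.exists_mem_of_ne_zero hV
    obtain ⟨V', rfl⟩ := Multiset.exists_cons_of_mem hb
    obtain ⟨Q, h1, h2⟩ := ih (V := V') (by simpa using h)
    exact ⟨(a, b) ::ₘ Q, by simp [h1], by simp [h2]⟩

lemma exists_le_card {S : Multiset E} {k : ℕ} (h : k ≤ S.card) : ∃ U ≤ S, U.card = k := by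
  induction S using Multiset.induction_on generalizing k with
  | empty => exact ⟨0, le_refl _, by simpa using h.antisymm' (Nat.zero_le _)⟩
  | cons a S ih =>
    rcases Nat.lt_or_ge S.card k with hk | hk
    · refine ⟨a ::ₘ S, le_rfl, ?_⟩
      simp at h ⊢; omega
    · obtain ⟨U, h1, h2⟩ := ih hk
      exact ⟨U, h1.trans (Multiset.le_cons_self _ _), h2⟩

lemma cost_le {Q : Multiset (E × E)} {D : ℝ≥0∞} (h : ∀ p ∈ Q, edist p.1 p.2 ≤ D) :
    cost Q ≤ Q.card * D := by
  have := Multiset.sum_le_card_nsmul (Q.map fun p => edist p.1 p.2) D (by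
    intro x hx
    obtain ⟨p, hp, rfl⟩ := Multiset.mem_map.1 hx
    exact h p hp)
  simpa [cost] using this

lemma exists_pair_le {A : Set E} {D : ℝ≥0∞} (hA : ∀ x ∈ A, ∀ y ∈ A, edist x y ≤ D)
    {S T : Multiset E} (hS : ∀ x ∈ S, x ∈ A) (hT : ∀ x ∈ T, x ∈ A) {k : ℕ}
    (h1 : k ≤ S.card) (h2 : k ≤ T.card) :
    ∃ Q : Multiset (E × E), Q.map Prod.fst ≤ S ∧ Q.map Prod.snd ≤ T ∧ Q.card = k ∧ cost Q ≤ k * D := by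
  obtain ⟨U, hU, hUc⟩ := exists_le_card h1
  obtain ⟨V, hV, hVc⟩ := exists_le_card h2
  obtain ⟨Q, hQ1, hQ2⟩ := exists_pair (hUc.trans hVc.symm)
  have hc : Q.card = k := by rw [← hUc, ← hQ1, Multiset.card_map]
  refine ⟨Q, hQ1 ▸ hU, hQ2 ▸ hV, hc, ?_⟩
  rw [← hc]
  apply cost_le
  intro p hp
  apply hA
  · apply hS; apply Multiset.mem_of_le hU; rw [← hQ1]; exact Multiset.mem_map_of_mem _ hp
  · apply hT; apply Multiset.mem_of_le hV; rw [← hQ2]; exact Multiset.mem_map_of_mem _ hp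

lemma Lm_le_card {A : Set E} {D : ℝ≥0∞} (hA : ∀ x ∈ A, ∀ y ∈ A, edist x y ≤ D)
    {S T : Multiset E} (hS : ∀ x ∈ S, x ∈ A) (hT : ∀ x ∈ T, x ∈ A) :
    Lm S T ≤ D * S.card := by
  obtain ⟨Q, h1, h2, h3, h4⟩ := exists_pair_le hA hS hT (min_le_left S.card T.card) (min_le_right _ _)
  refine (Lm_le ⟨h1, h2, h3⟩).trans (h4.trans ?_)
  rw [mul_comm]
  gcongr
  exact min_le_left _ _

lemma Lm_subadd {A : Set E} {D : ℝ≥0∞} (hA : ∀ x ∈ A, ∀ y ∈ A, edist x y ≤ D)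
    {S₁ S₂ T₁ T₂ : Multiset E} (hS₁ : ∀ x ∈ S₁, x ∈ A) (hS₂ : ∀ x ∈ S₂, x ∈ A)
    (hT₁ : ∀ x ∈ T₁, x ∈ A) (hT₂ : ∀ x ∈ T₂, x ∈ A) :
    Lm (S₁ + S₂) (T₁ + T₂) ≤ Lm S₁ T₁ + D * ENNReal.ofReal |(S₁.card : ℝ) - T₁.card| + Lm S₂ T₂ := by
  classical
  rw [add_right_comm]
  unfold Lm
  rw [ENNReal.iInf_add, ENNReal.iInf_add]
  refine le_iInf fun P₁ => ?_
  rw [ENNReal.add_iInf, ENNReal.iInf_add]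
  refine le_iInf fun P₂ => ?_
  obtain ⟨P₁, h11, h12, h13⟩ := P₁
  obtain ⟨P₂, h21, h22, h23⟩ := P₂
  set k := min (S₁.card + S₂.card) (T₁.card + T₂.card) - P₁.card - P₂.card with hk
  have c1 := Multiset.card_le_card h11
  have c2 := Multiset.card_le_card h12
  have c3 := Multiset.card_le_card h21
  have c4 := Multiset.card_le_card h22
  rw [Multiset.card_map] at c1 c2 c3 c4
  obtain ⟨Q, hQ1, hQ2, hQ3, hQ4⟩ := exists_pair_le hA
    (S := (S₁ - P₁.map Prod.fst) + (S₂ - P₂.map Prod.fst))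
    (T := (T₁ - P₁.map Prod.snd) + (T₂ - P₂.map Prod.snd)) (k := k)
    (by
      intro x hx
      rcases Multiset.mem_add.1 hx with h | h
      · exact hS₁ x (Multiset.mem_of_le (Multiset.sub_le_self _ _) h)
      · exact hS₂ x (Multiset.mem_of_le (Multiset.sub_le_self _ _) h))
    (by
      intro x hx
      rcases Multiset.mem_add.1 hx with h | h
      · exact hT₁ x (Multiset.mem_of_le (Multiset.sub_le_self _ _) h)
      · exact hT₂ x (Multiset.mem_of_le (Multiset.sub_le_self _ _) h))
    (by
      rw [Multiset.card_add, Multiset.card_sub h11, Multiset.card_sub h21]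
      simp only [Multiset.card_map]; omega)
    (by
      rw [Multiset.card_add, Multiset.card_sub h12, Multiset.card_sub h22]
      simp only [Multiset.card_map]; omega)
  have hM : IsMat (S₁ + S₂) (T₁ + T₂) (P₁ + P₂ + Q) := by
    refine ⟨?_, ?_, ?_⟩
    · rw [Multiset.map_add, Multiset.map_add]
      calc _ ≤ P₁.map Prod.fst + P₂.map Prod.fst + ((S₁ - P₁.map Prod.fst) + (S₂ - P₂.map Prod.fst)) := by
            gcongr
        _ = (S₁ - P₁.map Prod.fst + P₁.map Prod.fst) + (S₂ - P₂.map Prod.fst + P₂.map Prod.fst) := by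
            generalize S₁ - P₁.map Prod.fst = a
            generalize S₂ - P₂.map Prod.fst = b
            abel
        _ = _ := by rw [Multiset.sub_add_cancel h11, Multiset.sub_add_cancel h21]
    · rw [Multiset.map_add, Multiset.map_add]
      calc _ ≤ P₁.map Prod.snd + P₂.map Prod.snd + ((T₁ - P₁.map Prod.snd) + (T₂ - P₂.map Prod.snd)) := by
            gcongr
        _ = (T₁ - P₁.map Prod.snd + P₁.map Prod.snd) + (T₂ - P₂.map Prod.snd + P₂.map Prod.snd) := by
            generalize T₁ - P₁.map Prod.snd = a
            generalize T₂ - P₂.map Prod.snd = b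
            abel
        _ = _ := by rw [Multiset.sub_add_cancel h12, Multiset.sub_add_cancel h22]
    · simp only [Multiset.card_add, hQ3]; omega
  refine (Lm_le hM).trans ?_
  have hc : cost (P₁ + P₂ + Q) = cost P₁ + cost P₂ + cost Q := by
    simp [cost]
  rw [hc]
  gcongr
  refine hQ4.trans ?_
  rw [mul_comm]
  gcongr
  rw [← ENNReal.ofReal_natCast]
  apply ENNReal.ofReal_le_ofReal
  have : (k : ℤ) ≤ |(S₁.card : ℤ) - T₁.card| := by
    rcases abs_cases ((S₁.card : ℤ) - T₁.card) with h | h <;> omega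
  exact_mod_cast this

lemma exists_emb {ι κ : Type*} [DecidableEq ι] [DecidableEq κ] {α : Type*} (f : κ → α) (x : ι → α)
    (t : Finset κ) : ∀ u : Finset ι, t.val.map f ≤ u.val.map x →
    ∃ σ : κ → Option ι, (∀ i ∈ t, ∃ j ∈ u, σ i = some j ∧ x j = f i) ∧ Set.InjOn σ t := by
  classical
  induction t using Finset.induction_on with
  | empty => intro u _; exact ⟨fun _ => none, by simp, by simp⟩
  | insert a t ha ih =>
    intro u h
    rw [Finset.insert_val_of_notMem ha, Multiset.map_cons] at h
    have hm : f a ∈ u.val.map x := Multiset.mem_of_le h (Multiset.mem_cons_self _ _)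
    obtain ⟨j, hj, hjx⟩ := Multiset.mem_map.1 hm
    have hju : j ∈ u := hj
    obtain ⟨σ, h1, h2⟩ := ih (u.erase j) (by
      rw [← Finset.insert_erase hju, Finset.insert_val_of_notMem (Finset.notMem_erase _ _),
        Multiset.map_cons, hjx] at h
      exact (Multiset.cons_le_cons_iff _).1 h)
    refine ⟨Function.update σ a (some j), ?_, ?_⟩
    · intro i hi
      rcases Finset.mem_insert.1 hi with hia | hit
      · subst hia
        exact ⟨j, hju, by simp, hjx⟩
      · obtain ⟨l, hl, h3, h4⟩ := h1 i hit
        refine ⟨l, Finset.mem_of_mem_erase hl, ?_, h4⟩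
        rw [Function.update_of_ne]
        · exact h3
        · intro hia; exact ha (hia ▸ hit)
    · have key : ∀ i ∈ t, σ i ≠ some j := by
        intro i hi he
        obtain ⟨l, hl, h3, h4⟩ := h1 i hi
        rw [he] at h3
        simp at h3
        subst h3
        simp at hl
      have hne : ∀ i ∈ t, i ≠ a := by rintro i hi rfl; exact ha hi
      intro i hi i' hi' he
      simp only [Finset.coe_insert, Set.mem_insert_iff, Finset.mem_coe] at hi hi'
      rcases hi with rfl | hi <;> rcases hi' with rfl | hi'
      · rfl
      · rw [Function.update_self, Function.update_of_ne (hne _ hi')] at he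
        exact absurd he.symm (key _ hi')
      · rw [Function.update_self, Function.update_of_ne (hne _ hi)] at he
        exact absurd he (key _ hi)
      · rw [Function.update_of_ne (hne _ hi), Function.update_of_ne (hne _ hi')] at he
        exact h2 hi hi' he

lemma exists_emb' {k n : ℕ} {α : Type*} (f : Fin k → α) (x : Fin n → α) (h : ms f ≤ ms x) :
    ∃ σ : Fin k ↪ Fin n, ∀ i, x (σ i) = f i := by
  obtain ⟨σ, h1, h2⟩ := exists_emb f x Finset.univ Finset.univ h
  have h3 : ∀ i, ∃ j, σ i = some j ∧ x j = f i := fun i => by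
    obtain ⟨j, -, h⟩ := h1 i (Finset.mem_univ _)
    exact ⟨j, h⟩
  choose g hg using h3
  refine ⟨⟨g, ?_⟩, fun i => (hg i).2⟩
  intro i i' he
  apply h2 (by simp) (by simp)
  rw [(hg i).1, (hg i').1, he]

lemma Lm_eq {n m : ℕ} (x : Fin n → E) (y : Fin m → E) :
    Lm (ms x) (ms y) = ⨅ (σ : Fin (min n m) ↪ Fin n), ⨅ (τ : Fin (min n m) ↪ Fin m),
      ∑ i, edist (x (σ i)) (y (τ i)) := by
  have cx : (ms x).card = n := by simp [ms]
  have cy : (ms y).card = m := by simp [ms]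
  have hle : ∀ {k n : ℕ} (x : Fin n → E) (σ : Fin k ↪ Fin n), ms (x ∘ σ) ≤ ms x := by
    intro k n x σ
    unfold ms
    rw [← Multiset.map_map]
    apply Multiset.map_le_map
    rw [← Finset.map_val, Finset.val_le_iff]
    exact Finset.subset_univ _
  apply le_antisymm
  · refine le_iInf fun σ => le_iInf fun τ => ?_
    have : IsMat (ms x) (ms y) (ms fun i => (x (σ i), y (τ i))) := by
      refine ⟨?_, ?_, ?_⟩
      · convert hle x σ using 1; simp [ms, Function.comp_def]
      · convert hle y τ using 1; simp [ms, Function.comp_def]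
      · rw [cx, cy]; simp [ms]
    refine (Lm_le this).trans (le_of_eq ?_)
    simp [cost, ms, Function.comp_def, List.sum_ofFn]
  · refine le_iInf ?_
    rintro ⟨P, h1, h2, h3⟩
    rw [cx, cy] at h3
    have : ∃ p : Fin (min n m) → E × E, P = ms p := by
      rw [← h3]
      induction P using Quotient.inductionOn with
      | _ l =>
        refine ⟨l.get, ?_⟩
        have : (Finset.univ.val : Multiset (Fin l.length)) = (List.finRange l.length : Multiset _) := rfl
        unfold ms
        erw [this, Multiset.map_coe]
        simp
    obtain ⟨p, rfl⟩ := this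
    obtain ⟨σ, hσ⟩ := exists_emb' (fun i => (p i).1) x (by
      convert h1 using 1; simp [ms, Function.comp_def])
    obtain ⟨τ, hτ⟩ := exists_emb' (fun i => (p i).2) y (by
      convert h2 using 1; simp [ms, Function.comp_def])
    refine (iInf_le_of_le σ (iInf_le_of_le τ (le_of_eq ?_)))
    simp [cost, ms, Function.comp_def, hσ, hτ, List.sum_ofFn]

lemma Lm_map_le {φ : E → E} {r : ℝ≥0∞} (hφ : ∀ x y, edist (φ x) (φ y) = r * edist x y)
    (hr : r ≠ ∞) (hr0 : r ≠ 0)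
    (S T : Multiset E) : Lm (S.map φ) (T.map φ) ≤ r * Lm S T := by
  unfold Lm
  rw [ENNReal.mul_iInf_of_ne hr0 hr]
  refine le_iInf ?_
  rintro ⟨P, h1, h2, h3⟩
  have : IsMat (S.map φ) (T.map φ) (P.map fun p => (φ p.1, φ p.2)) := by
    refine ⟨?_, ?_, ?_⟩
    · have := Multiset.map_le_map (f := φ) h1
      simpa [Function.comp_def] using this
    · have := Multiset.map_le_map (f := φ) h2
      simpa [Function.comp_def] using this
    · simpa using h3
  refine (Lm_le this).trans (le_of_eq ?_)
  simp [cost, hφ, Multiset.sum_map_mul_left]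

end matching


lemma HasSum_trans_eq {f : ℕ → ℝ} {s t : ℝ} (h : HasSum f s) (e : s = t) :
    HasSum f t := e ▸ h

lemma hasSum_pois_shift (a : ℝ) (g : ℕ → ℝ) (s : ℝ)
    (h : HasSum (fun n : ℕ => Real.exp (-a) * a ^ n / n.factorial * g (n + 1)) s) :
    HasSum (fun n : ℕ => Real.exp (-a) * a ^ n / n.factorial * (n * g n)) (a * s) := by
  rw [← hasSum_nat_add_iff' 1]
  simp only [Finset.range_one, Finset.sum_singleton, Nat.cast_zero, zero_mul, mul_zero, sub_zero]
  refine (h.mul_left a).congr_fun fun n => ?_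
  rw [Nat.factorial_succ]
  push_cast
  have : (n.factorial : ℝ) ≠ 0 := by positivity
  have : (n + 1 : ℝ) ≠ 0 := by positivity
  field_simp
  ring

lemma hasSum_pois_mean (a : ℝ) :
    HasSum (fun n : ℕ => Real.exp (-a) * a ^ n / n.factorial * (n : ℝ)) a := by
  have := hasSum_pois_shift a (fun _ => 1) 1 (by simpa using hasSum_pois a)
  simpa using this

lemma hasSum_pois_sq (a : ℝ) :
    HasSum (fun n : ℕ => Real.exp (-a) * a ^ n / n.factorial * ((n : ℝ) * n)) (a * (a + 1)) := by
  refine hasSum_pois_shift a (fun n => (n : ℝ)) (a + 1) ?_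
  refine ((hasSum_pois_mean a).add (hasSum_pois a)).congr_fun fun n => ?_
  push_cast; ring

lemma hasSum_inner (a s : ℝ) (n : ℕ) :
    HasSum (fun m : ℕ => Real.exp (-a) * a ^ m / m.factorial * ((((n : ℝ) - m) ^ 2 / s + s) / 2))
      (((n * n - 2 * n * a + a * (a + 1)) / s + s) / 2) := by
  have h := ((((hasSum_pois a).mul_left ((n : ℝ) * n)).sub ((hasSum_pois_mean a).mul_left (2 * (n : ℝ)))).add
    (hasSum_pois_sq a)).div_const s |>.add ((hasSum_pois a).mul_left s) |>.div_const 2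
  refine HasSum_trans_eq (HasSum.congr_fun h fun m => ?_) ?_
  · ring
  · ring

lemma hasSum_outer (a s : ℝ) :
    HasSum (fun n : ℕ => Real.exp (-a) * a ^ n / n.factorial *
      (((n * n - 2 * n * a + a * (a + 1)) / s + s) / 2)) ((2 * a / s + s) / 2) := by
  have h := ((((hasSum_pois_sq a)).sub ((hasSum_pois_mean a).mul_left (2 * a))).add
    ((hasSum_pois a).mul_left (a * (a + 1)))).div_const s |>.add ((hasSum_pois a).mul_left s)
    |>.div_const 2
  refine HasSum_trans_eq (HasSum.congr_fun h fun m => ?_) ?_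
  · ring
  · ring

section PPsec
variable {E : Type*} [MeasurableSpace E]

/-- bipartite Poisson expectation -/
noncomputable def PP (ν : Measure E) (K : Multiset E → Multiset E → ℝ≥0∞) : ℝ≥0∞ :=
  Po ν (fun S => Po ν (fun T => K S T))

lemma ofReal_pois_tsum {a : ℝ} (ha : 0 ≤ a) {g : ℕ → ℝ} (hg : ∀ n, 0 ≤ g n) {s : ℝ}
    (h : HasSum (fun n : ℕ => Real.exp (-a) * a ^ n / n.factorial * g n) s) :
    ∑' n : ℕ, ENNReal.ofReal (Real.exp (-a) * a ^ n / n.factorial) * ENNReal.ofReal (g n) =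
      ENNReal.ofReal s := by
  rw [← h.tsum_eq, ENNReal.ofReal_tsum_of_nonneg _ h.summable]
  · congr 1; ext n
    rw [ENNReal.ofReal_mul (by positivity)]
  · intro n; have := hg n; positivity

lemma EE_le (ν : Measure E) [IsFiniteMeasure ν] (ha : 0 < (ν Set.univ).toReal) :
    PP ν (fun S T => ENNReal.ofReal |(S.card : ℝ) - T.card|) ≤
      ENNReal.ofReal (2 * √((ν Set.univ).toReal)) := by
  set a := (ν Set.univ).toReal with hadef
  set s := √a with hs
  have hs0 : 0 < s := Real.sqrt_pos.2 ha
  have hss : s * s = a := Real.mul_self_sqrt ha.le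
  have h1 : ∀ n : ℕ, 0 ≤ ((n * n - 2 * n * a + a * (a + 1)) / s + s) / 2 := by
    intro n
    have : 0 ≤ (n * n - 2 * n * a + a * (a + 1) : ℝ) := by nlinarith [sq_nonneg ((n : ℝ) - a)]
    positivity
  calc PP ν (fun S T => ENNReal.ofReal |(S.card : ℝ) - T.card|)
      ≤ PP ν (fun S T => ENNReal.ofReal ((((S.card : ℝ) - T.card) ^ 2 / s + s) / 2)) := by
        refine Po_mono ν (A := Set.univ) (by simp) fun S _ => Po_mono ν (A := Set.univ) (by simp)
          fun T _ => ENNReal.ofReal_le_ofReal ?_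
        rw [le_div_iff₀ (by norm_num), div_add' _ _ _ hs0.ne', le_div_iff₀ hs0, ← sq_abs]
        nlinarith [sq_nonneg (|(S.card : ℝ) - T.card| - s)]
    _ = ENNReal.ofReal ((2 * a / s + s) / 2) := by
        unfold PP
        have : ∀ S : Multiset E, Po ν (fun T => ENNReal.ofReal ((((S.card : ℝ) - T.card) ^ 2 / s + s) / 2))
            = ENNReal.ofReal (((S.card * S.card - 2 * S.card * a + a * (a + 1)) / s + s) / 2) := by
          intro S
          rw [Po_card ν (fun m => ENNReal.ofReal ((((S.card : ℝ) - m) ^ 2 / s + s) / 2))]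
          exact ofReal_pois_tsum ha.le (fun n => by positivity) (hasSum_inner a s S.card)
        simp_rw [this]
        rw [Po_card ν (fun n => ENNReal.ofReal (((n * n - 2 * n * a + a * (a + 1)) / s + s) / 2))]
        exact ofReal_pois_tsum ha.le h1 (hasSum_outer a s)
    _ ≤ _ := by
        apply ENNReal.ofReal_le_ofReal
        rw [← hss]
        field_simp
        nlinarith

variable [PseudoEMetricSpace E] [OpensMeasurableSpace E] [SecondCountableTopology E]

lemma Lm_meas (n m : ℕ) :
    Measurable fun p : (Fin n → E) × (Fin m → E) => Lm (ms p.1) (ms p.2) := by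
  simp_rw [Lm_eq]
  refine Measurable.iInf fun σ => Measurable.iInf fun τ => Finset.measurable_sum _ fun i _ => ?_
  exact ((measurable_pi_apply _).comp measurable_fst).edist
    ((measurable_pi_apply _).comp measurable_snd)

lemma Lm_MF (S : Multiset E) : MF (Lm S) := by
  obtain ⟨n, x, rfl⟩ := exists_ms S
  intro m
  exact (Lm_meas n m).comp measurable_prodMk_left

lemma Po_Lm_MF (ν : Measure E) [IsFiniteMeasure ν] : MF (fun S => Po ν (Lm S)) := by
  intro n
  exact Po_meas ν (fun x : Fin n → E => Lm (ms x)) fun m => Lm_meas n m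

lemma PP_subadd (ν₁ ν₂ : Measure E) [IsFiniteMeasure ν₁] [IsFiniteMeasure ν₂] {A : Set E} {D : ℝ≥0∞}
    (hD : D ≠ ∞) (hA : ∀ x ∈ A, ∀ y ∈ A, edist x y ≤ D)
    (h₁ : ∀ᵐ x ∂ν₁, x ∈ A) (h₂ : ∀ᵐ x ∂ν₂, x ∈ A) (ha : 0 < (ν₁ Set.univ).toReal) :
    PP (ν₁ + ν₂) Lm ≤ PP ν₁ Lm + PP ν₂ Lm + D * ENNReal.ofReal (2 * √((ν₁ Set.univ).toReal)) := by
  set δ : Multiset E → Multiset E → ℝ≥0∞ := fun S T => ENNReal.ofReal |(S.card : ℝ) - T.card| with hδ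
  have e1 : PP (ν₁ + ν₂) Lm = Po ν₁ fun S₁ => Po ν₂ fun S₂ => Po ν₁ fun T₁ => Po ν₂ fun T₂ =>
      Lm (S₁ + S₂) (T₁ + T₂) := by
    unfold PP
    rw [Po_add_measure ν₁ ν₂ (Po_Lm_MF (ν₁ + ν₂))]
    congr 1; ext S₁
    congr 1; ext S₂
    rw [Po_add_measure ν₁ ν₂ (Lm_MF _)]
  rw [e1]
  calc _ ≤ Po ν₁ fun S₁ => Po ν₂ fun S₂ => Po ν₁ fun T₁ => Po ν₂ fun T₂ =>
      (Lm S₁ T₁ + D * δ S₁ T₁) + Lm S₂ T₂ := by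
        refine Po_mono ν₁ h₁ fun S₁ hS₁ => Po_mono ν₂ h₂ fun S₂ hS₂ => Po_mono ν₁ h₁ fun T₁ hT₁ =>
          Po_mono ν₂ h₂ fun T₂ hT₂ => ?_
        exact Lm_subadd hA hS₁ hS₂ hT₁ hT₂
    _ = PP ν₁ Lm + D * PP ν₁ δ + PP ν₂ Lm := by
        have s1 : ∀ S₁ S₂ T₁, (Po ν₂ fun T₂ => (Lm S₁ T₁ + D * δ S₁ T₁) + Lm S₂ T₂) =
            (Lm S₁ T₁ + D * δ S₁ T₁) + Po ν₂ (Lm S₂) := by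
          intro S₁ S₂ T₁
          rw [Po_add ν₂ (F := fun _ => (Lm S₁ T₁ + D * δ S₁ T₁)) (Lm_MF S₂), Po_const]
        simp_rw [s1]
        have s2 : ∀ S₁ S₂, (Po ν₁ fun T₁ => (Lm S₁ T₁ + D * δ S₁ T₁) + Po ν₂ (Lm S₂)) =
            (Po ν₁ (Lm S₁) + D * Po ν₁ (δ S₁)) + Po ν₂ (Lm S₂) := by
          intro S₁ S₂
          rw [Po_add ν₁ (F := fun T₁ => (Lm S₁ T₁ + D * δ S₁ T₁)) (MF_const _), Po_const,
            Po_add ν₁ (F := Lm S₁), Po_const_mul _ _ hD]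
          exact MF_card (fun m => D * ENNReal.ofReal |(S₁.card : ℝ) - m|)
        simp_rw [s2]
        have s3 : ∀ S₁, (Po ν₂ fun S₂ => (Po ν₁ (Lm S₁) + D * Po ν₁ (δ S₁)) + Po ν₂ (Lm S₂)) =
            (Po ν₁ (Lm S₁) + D * Po ν₁ (δ S₁)) + PP ν₂ Lm := by
          intro S₁
          rw [Po_add ν₂ (F := fun _ => _) (Po_Lm_MF ν₂), Po_const]
          rfl
        simp_rw [s3]
        rw [Po_add ν₁ (F := fun S₁ => (Po ν₁ (Lm S₁) + D * Po ν₁ (δ S₁))) (MF_const _), Po_const,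
            Po_add ν₁ (F := fun S₁ => Po ν₁ (Lm S₁)), Po_const_mul _ _ hD]
        · rfl
        · exact MF_card (fun n => D * Po ν₁ fun T => ENNReal.ofReal |(n : ℝ) - T.card|)
    _ = PP ν₁ Lm + PP ν₂ Lm + D * PP ν₁ δ := by ring
    _ ≤ _ := by
        gcongr
        exact EE_le ν₁ ha

lemma PP_map_le (ν : Measure E) [IsFiniteMeasure ν] {φ : E → E} (hφm : Measurable φ) {r : ℝ≥0∞}
    (hφ : ∀ x y, edist (φ x) (φ y) = r * edist x y) (hr : r ≠ ∞) (hr0 : r ≠ 0) :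
    PP (ν.map φ) Lm ≤ r * PP ν Lm := by
  unfold PP
  rw [Po_map ν hφm (Po_Lm_MF _), ← Po_const_mul _ _ hr]
  refine Po_mono ν (A := Set.univ) (by simp) fun S _ => ?_
  rw [Po_map ν hφm (Lm_MF _), ← Po_const_mul _ _ hr]
  exact Po_mono ν (A := Set.univ) (by simp) fun T _ => Lm_map_le hφ hr hr0 S T

lemma PP_le (ν : Measure E) [IsFiniteMeasure ν] {A : Set E} {D : ℝ≥0∞}
    (hD : D ≠ ∞) (hA : ∀ x ∈ A, ∀ y ∈ A, edist x y ≤ D) (h₁ : ∀ᵐ x ∂ν, x ∈ A) :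
    PP ν Lm ≤ D * ν Set.univ := by
  calc PP ν Lm ≤ Po ν fun S => Po ν fun T => D * S.card :=
        Po_mono ν h₁ fun S hS => Po_mono ν h₁ fun T hT => Lm_le_card hA hS hT
    _ = D * ν Set.univ := by
        simp_rw [Po_const]
        rw [Po_const_mul _ _ hD, Po_card ν (fun n => (n : ℝ≥0∞))]
        congr 1
        have := ofReal_pois_tsum (a := (ν Set.univ).toReal) ENNReal.toReal_nonneg
          (g := fun n => (n : ℝ)) (fun n => by positivity) (hasSum_pois_mean _)
        simp only [ENNReal.ofReal_natCast] at this
        rw [this, ENNReal.ofReal_toReal (measure_ne_top _ _)]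

end PPsec


section cube

/-- uniform measure on the unit interval -/
noncomputable def U1 : Measure ℝ := volume.restrict (Set.Icc 0 1)

instance U1_prob : IsProbabilityMeasure U1 := ⟨by simp [U1]⟩

lemma restrict_Ico_nat (n : ℕ) : (volume : Measure ℝ).restrict (Set.Ico 0 (n : ℝ)) =
    ∑ k ∈ Finset.range n, U1.map (fun t => t + (k : ℝ)) := by
  induction n with
  | zero => simp
  | succ n ih =>
    rw [Finset.sum_range_succ, ← ih, U1, ← restrict_Ico_eq_restrict_Icc]
    have h : Set.Ico (0 : ℝ) ((n + 1 : ℕ) : ℝ) = Set.Ico 0 (n : ℝ) ∪ Set.Ico (n : ℝ) (n + 1) := by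
      rw [Set.Ico_union_Ico_eq_Ico (by positivity) (by linarith)]; push_cast; rfl
    rw [h, Measure.restrict_union _ measurableSet_Ico]
    · congr 1
      have h2 : Set.Ico (0 : ℝ) 1 = (fun t : ℝ => t + (n : ℝ)) ⁻¹' (Set.Ico (n : ℝ) (n + 1)) := by
        ext t
        simp only [Set.mem_Ico, Set.mem_preimage]
        constructor <;> rintro ⟨h, h'⟩ <;> constructor <;> linarith
      rw [h2, ← Measure.restrict_map (by fun_prop) measurableSet_Ico, map_add_right_eq_self]
    · rw [Set.disjoint_left]
      intro t h1 h2
      exact absurd h1.2 (not_lt.2 h2.1)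

lemma U1_split (j : ℕ) (hj : 0 < j) :
    U1 = ∑ k : Fin j, ((j : ℝ≥0∞)⁻¹ • U1).map (fun t => (j : ℝ)⁻¹ * (t + (k : ℕ))) := by
  have hj' : (0 : ℝ) < j := by exact_mod_cast hj
  have hjn : (j : ℝ≥0∞) ≠ 0 := by exact_mod_cast hj.ne'
  have h1 : (j : ℝ≥0∞) • U1 =
      ((volume : Measure ℝ).restrict (Set.Ico 0 (j : ℝ))).map (fun t => (j : ℝ)⁻¹ * t) := by
    have h2 : Set.Ico (0 : ℝ) j = (fun t : ℝ => (j : ℝ)⁻¹ * t) ⁻¹' (Set.Ico (0 : ℝ) 1) := by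
      ext t
      simp only [Set.mem_Ico, Set.mem_preimage]
      rw [inv_mul_lt_iff₀ hj', mul_one]
      constructor
      · rintro ⟨h, h'⟩; exact ⟨by positivity, h'⟩
      · rintro ⟨h, h'⟩; exact ⟨by
          by_contra hc
          push Not at hc
          have := mul_neg_of_pos_of_neg (inv_pos.2 hj') hc
          linarith, h'⟩
    rw [h2, ← Measure.restrict_map (by fun_prop) measurableSet_Ico,
      Real.map_volume_mul_left (by positivity), Measure.restrict_smul, restrict_Ico_eq_restrict_Icc]
    rw [inv_inv, abs_of_pos hj', ENNReal.ofReal_natCast]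
    rfl
  have h3 : U1 = (j : ℝ≥0∞)⁻¹ • ((j : ℝ≥0∞) • U1) := by
    rw [smul_smul, ENNReal.inv_mul_cancel hjn (by simp), one_smul]
  rw [h1, restrict_Ico_nat, Measure.map_finset_sum (by fun_prop), Finset.smul_sum,
    Finset.sum_range] at h3
  refine h3.trans (Finset.sum_congr rfl fun k _ => ?_)
  rw [Measure.map_map (by fun_prop) (by fun_prop), Measure.map_smul]
  rfl

variable (d : ℕ)

lemma unif_eq : unifCube d = (Measure.pi fun _ : Fin d => U1).map (WithLp.toLp 2) := by
  have h := (PiLp.volume_preserving_toLp (Fin d)).restrict_preimage_emb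
    (MeasurableEquiv.toLp 2 (Fin d → ℝ)).measurableEmbedding (unitCube d)
  unfold unifCube
  rw [← h.map_eq]
  congr 1
  unfold U1
  rw [← Measure.restrict_pi_pi]
  congr 1
  ext x
  simp [unitCube, Set.mem_pi, Pi.le_def, forall_and]

instance unif_prob : IsProbabilityMeasure (unifCube d) := by
  rw [unif_eq]
  exact Measure.isProbabilityMeasure_map (by fun_prop)

lemma unitCube_meas : MeasurableSet (unitCube d) := by
  have : unitCube d = ⋂ i, (fun x : EuclideanSpace ℝ (Fin d) => x i) ⁻¹' (Set.Icc 0 1) := by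
    ext x; simp [unitCube]
  rw [this]
  exact MeasurableSet.iInter fun i => measurableSet_Icc.preimage (by fun_prop)

lemma unif_ae : ∀ᵐ x ∂(unifCube d), x ∈ unitCube d := ae_restrict_mem (unitCube_meas d)

/-- cell map -/
noncomputable def cell (j : ℕ) (v : Fin d → Fin j) (x : EuclideanSpace ℝ (Fin d)) :
    EuclideanSpace ℝ (Fin d) := (j : ℝ)⁻¹ • (x + WithLp.toLp 2 (fun i => ((v i : ℕ) : ℝ)))

lemma cell_meas (j : ℕ) (v : Fin d → Fin j) : Measurable (cell d j v) := by
  unfold cell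
  fun_prop

lemma unif_split (j : ℕ) (hj : 0 < j) :
    unifCube d = ∑ v : Fin d → Fin j, (((j : ℝ≥0∞)⁻¹ ^ d) • unifCube d).map (cell d j v) := by
  have hjn : (j : ℝ≥0∞)⁻¹ ≠ ∞ := by
    simp [hj.ne']
  have hfin : IsFiniteMeasure ((j : ℝ≥0∞)⁻¹ • U1) := by
    refine ⟨?_⟩
    simpa using hj
  conv_lhs => rw [unif_eq, U1_split j hj, pi_sum, Measure.map_finset_sum (by fun_prop)]
  refine Finset.sum_congr rfl fun v _ => ?_
  rw [← Measure.pi_map_pi (fun i => by fun_prop), pi_smul' _ _ hjn, unif_eq,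
    Measure.map_smul, Measure.map_smul, Measure.map_smul, Measure.map_map (by fun_prop) (by fun_prop),
    Measure.map_map (cell_meas d j v) (by fun_prop)]
  congr 1

lemma cell_mem (j : ℕ) (hj : 0 < j) (v : Fin d → Fin j) {x} (hx : x ∈ unitCube d) :
    cell d j v x ∈ unitCube d := by
  intro i
  have h := hx i
  have hj' : (0 : ℝ) < j := by exact_mod_cast hj
  have hv : ((v i : ℕ) : ℝ) + 1 ≤ j := by exact_mod_cast (v i).2
  simp only [cell, PiLp.smul_apply, PiLp.add_apply, smul_eq_mul, Set.mem_Icc] at h ⊢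
  constructor
  · have := h.1; positivity
  · rw [inv_mul_le_iff₀ hj']; linarith [h.2]

lemma cell_edist (j : ℕ) (v : Fin d → Fin j) (x y) :
    edist (cell d j v x) (cell d j v y) = ENNReal.ofReal ((j : ℝ)⁻¹) * edist x y := by
  rw [edist_dist, edist_dist, ← ENNReal.ofReal_mul (by positivity)]
  congr 1
  unfold cell
  rw [dist_smul₀, dist_add_right]
  simp

lemma cube_diam : ∀ x ∈ unitCube d, ∀ y ∈ unitCube d, edist x y ≤ ENNReal.ofReal √d := by
  intro x hx y hy
  rw [edist_dist, EuclideanSpace.dist_eq]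
  apply ENNReal.ofReal_le_ofReal
  apply Real.sqrt_le_sqrt
  calc ∑ i, dist (x.ofLp i) (y.ofLp i) ^ 2 ≤ ∑ i : Fin d, (1 : ℝ) := by
        refine Finset.sum_le_sum fun i _ => ?_
        have h1 := hx i
        have h2 := hy i
        simp only [Set.mem_Icc] at h1 h2
        rw [Real.dist_eq, sq_abs]
        nlinarith
    _ = d := by simp

lemma LMBM_eq {n m : ℕ} (x : Fin n → EuclideanSpace ℝ (Fin d)) (y : Fin m → EuclideanSpace ℝ (Fin d)) :
    Lm (ms x) (ms y) = ENNReal.ofReal (LMBM x y) := by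
  have h : LMBM x y = sInf {s | ∃ (σ : Fin (min n m) ↪ Fin n) (τ : Fin (min n m) ↪ Fin m),
      s = ∑ i, dist (x (σ i)) (y (τ i))} := by
    unfold LMBM LMBMon
    rw [Finset.card_fin, Finset.card_fin]
    simp
  have hr : {s | ∃ (σ : Fin (min n m) ↪ Fin n) (τ : Fin (min n m) ↪ Fin m),
      s = ∑ i, dist (x (σ i)) (y (τ i))} = Set.range
      (fun p : (Fin (min n m) ↪ Fin n) × (Fin (min n m) ↪ Fin m) =>
        ∑ i, dist (x (p.1 i)) (y (p.2 i))) := by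
    ext s
    simp [eq_comm]
  rw [hr] at h
  have hfin := Set.finite_range (fun p : (Fin (min n m) ↪ Fin n) × (Fin (min n m) ↪ Fin m) =>
        ∑ i, dist (x (p.1 i)) (y (p.2 i)))
  have hne : (Set.range (fun p : (Fin (min n m) ↪ Fin n) × (Fin (min n m) ↪ Fin m) =>
        ∑ i, dist (x (p.1 i)) (y (p.2 i)))).Nonempty :=
    ⟨_, ⟨(Fin.castLEEmb (min_le_left _ _), Fin.castLEEmb (min_le_right _ _)), rfl⟩⟩
  have hs : ∀ (σ : Fin (min n m) ↪ Fin n) (τ : Fin (min n m) ↪ Fin m),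
      ∑ i, edist (x (σ i)) (y (τ i)) = ENNReal.ofReal (∑ i, dist (x (σ i)) (y (τ i))) := by
    intro σ τ
    rw [ENNReal.ofReal_sum_of_nonneg (fun _ _ => dist_nonneg)]
    simp [edist_dist]
  rw [Lm_eq]
  obtain ⟨p, hp⟩ := hne.csInf_mem hfin
  rw [← h] at hp
  apply le_antisymm
  · refine iInf_le_of_le p.1 (iInf_le_of_le p.2 ?_)
    rw [hs, ← hp]
  · refine le_iInf fun σ => le_iInf fun τ => ?_
    rw [hs, h]
    exact ENNReal.ofReal_le_ofReal (csInf_le hfin.bddBelow ⟨(σ, τ), rfl⟩)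

lemma LMBM_nonneg {n m : ℕ} (x : Fin n → EuclideanSpace ℝ (Fin d))
    (y : Fin m → EuclideanSpace ℝ (Fin d)) : 0 ≤ LMBM x y := by
  unfold LMBM LMBMon
  apply Real.sInf_nonneg
  rintro s ⟨σ, τ, -, -, rfl⟩
  positivity

lemma smul_fin (lam : ℝ) : IsFiniteMeasure (ENNReal.ofReal lam • unifCube d) := by
  refine ⟨?_⟩
  simp

lemma smul_mass (lam : ℝ) (h : 0 ≤ lam) :
    ((ENNReal.ofReal lam • unifCube d) Set.univ).toReal = lam := by
  simp [h]

lemma PP_fin (lam : ℝ) : PP (ENNReal.ofReal lam • unifCube d) Lm ≠ ∞ := by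
  have := smul_fin d lam
  refine ne_top_of_le_ne_top ?_ (PP_le (ENNReal.ofReal lam • unifCube d) (A := unitCube d)
    ENNReal.ofReal_ne_top (cube_diam d) (Measure.ae_smul_measure (unif_ae d) _))
  simp [ENNReal.mul_eq_top]

lemma MP_eq (lam : ℝ) (h : 0 ≤ lam) :
    MP d lam = (PP (ENNReal.ofReal lam • unifCube d) Lm).toReal := by
  have hfin := smul_fin d lam
  have e : PP (ENNReal.ofReal lam • unifCube d) Lm = ∑' n : ℕ, ∑' m : ℕ,
      ENNReal.ofReal (Real.exp (-lam) * lam ^ n / n.factorial) *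
      (ENNReal.ofReal (Real.exp (-lam) * lam ^ m / m.factorial) *
        ∫⁻ p : (Fin n → EuclideanSpace ℝ (Fin d)) × (Fin m → EuclideanSpace ℝ (Fin d)),
          Lm (ms p.1) (ms p.2)
          ∂ ((Measure.pi fun _ => unifCube d).prod (Measure.pi fun _ => unifCube d))) := by
    unfold PP Po
    rw [smul_mass d lam h]
    congr 1; ext n
    have hm : ∀ m : ℕ, Measurable fun x : Fin n → EuclideanSpace ℝ (Fin d) =>
      ENNReal.ofReal (Real.exp (-lam) / m.factorial) *
        ∫⁻ y : Fin m → EuclideanSpace ℝ (Fin d), Lm (ms x) (ms y)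
          ∂(Measure.pi fun _ => ENNReal.ofReal lam • unifCube d) := fun m =>
      (Measurable.lintegral_prod_right' (Lm_meas n m)).const_mul _
    rw [lintegral_tsum (fun m => (hm m).aemeasurable), ← ENNReal.tsum_mul_left]
    congr 1; ext m
    rw [lintegral_const_mul' _ _ ENNReal.ofReal_ne_top,
      pi_smul' _ _ ENNReal.ofReal_ne_top, pi_smul' _ _ ENNReal.ofReal_ne_top, lintegral_smul_measure,
      lintegral_prod _ (Lm_meas n m).aemeasurable]
    simp_rw [lintegral_smul_measure]
    simp_rw [smul_eq_mul]
    rw [lintegral_const_mul' _ _ (by simp)]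
    have w : ∀ n : ℕ, ENNReal.ofReal (Real.exp (-lam) * lam ^ n / n.factorial) =
        ENNReal.ofReal (Real.exp (-lam) / n.factorial) * ENNReal.ofReal lam ^ n := by
      intro n
      rw [← ENNReal.ofReal_pow h, ← ENNReal.ofReal_mul (by positivity)]
      congr 1; ring
    rw [w, w]
    ring
  have hne := PP_fin d lam
  rw [e] at hne ⊢
  have h1 := fun n => ENNReal.ne_top_of_tsum_ne_top hne n
  have h2 := fun n m => ENNReal.ne_top_of_tsum_ne_top (h1 n) m
  rw [ENNReal.tsum_toReal_eq h1]
  unfold MP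
  congr 1; ext n
  rw [ENNReal.tsum_toReal_eq (h2 n)]
  congr 1; ext m
  rw [ENNReal.toReal_mul, ENNReal.toReal_mul, ENNReal.toReal_ofReal (by positivity),
    ENNReal.toReal_ofReal (by positivity), ← integral_toReal (Lm_meas n m).aemeasurable]
  · simp_rw [LMBM_eq, ENNReal.toReal_ofReal (LMBM_nonneg d _ _)]
  · refine Filter.Eventually.of_forall fun p => ?_
    rw [LMBM_eq]; exact ENNReal.ofReal_lt_top

lemma MP_nonneg (lam : ℝ) (h : 0 ≤ lam) : 0 ≤ MP d lam := by
  rw [MP_eq d lam h]; exact ENNReal.toReal_nonneg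

lemma MP_le (lam : ℝ) (h : 0 ≤ lam) : MP d lam ≤ √d * lam := by
  have := smul_fin d lam
  rw [MP_eq d lam h]
  refine ENNReal.toReal_le_of_le_ofReal (by positivity) ?_
  refine (PP_le (ENNReal.ofReal lam • unifCube d) (A := unitCube d)
    ENNReal.ofReal_ne_top (cube_diam d) (Measure.ae_smul_measure (unif_ae d) _)).trans (le_of_eq ?_)
  simp [ENNReal.ofReal_mul]

lemma MP_add (a b : ℝ) (ha : 0 < a) (hb : 0 ≤ b) :
    MP d (a + b) ≤ MP d a + MP d b + √d * (2 * √a) := by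
  have h1 := smul_fin d a
  have h2 := smul_fin d b
  rw [MP_eq d _ (by positivity), MP_eq d a ha.le, MP_eq d b hb]
  have h := PP_subadd (ENNReal.ofReal a • unifCube d) (ENNReal.ofReal b • unifCube d) 
    (A := unitCube d) ENNReal.ofReal_ne_top (cube_diam d) (Measure.ae_smul_measure (unif_ae d) _)
    (Measure.ae_smul_measure (unif_ae d) _) (by rw [smul_mass d a ha.le]; exact ha)
  rw [smul_mass d a ha.le, ← add_smul, ← ENNReal.ofReal_add ha.le hb] at h
  refine (ENNReal.toReal_mono ?_ h).trans (le_of_eq ?_)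
  · simp [PP_fin, ENNReal.mul_eq_top]
  · rw [ENNReal.toReal_add (by simp [PP_fin]) (by simp [ENNReal.mul_eq_top]),
      ENNReal.toReal_add (PP_fin _ _) (PP_fin _ _), ← ENNReal.ofReal_mul (by positivity),
      ENNReal.toReal_ofReal (by positivity)]

lemma PP_sum_le {ι : Type*} (s : Finset ι) (ν : ι → Measure (EuclideanSpace ℝ (Fin d)))
    (hfin : ∀ i, IsFiniteMeasure (ν i)) (a : ℝ) (ha : 0 < a) (hν : ∀ i, ((ν i) Set.univ).toReal = a)
    (hA : ∀ i, ∀ᵐ x ∂(ν i), x ∈ unitCube d) (B : ℝ≥0∞) (hB : ∀ i, PP (ν i) Lm ≤ B) :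
    PP (∑ i ∈ s, ν i) Lm ≤ s.card * (B + ENNReal.ofReal (√d) * ENNReal.ofReal (2 * √a)) := by
  classical
  have hae : ∀ s : Finset ι, ∀ᵐ x ∂(∑ i ∈ s, ν i), x ∈ unitCube d := by
    intro s
    induction s using Finset.induction_on with
    | empty => simp
    | insert i s hi ih => rw [Finset.sum_insert hi, ae_add_measure_iff]; exact ⟨hA i, ih⟩
  induction s using Finset.induction_on with
  | empty =>
    have := PP_le (0 : Measure (EuclideanSpace ℝ (Fin d))) (A := unitCube d)
      (D := ENNReal.ofReal (√d)) ENNReal.ofReal_ne_top (cube_diam d) (by simp)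
    simpa using this
  | insert i s hi ih =>
    rw [Finset.sum_insert hi, Finset.card_insert_of_notMem hi]
    have h := PP_subadd (ν i) (∑ i ∈ s, ν i) (A := unitCube d) ENNReal.ofReal_ne_top (cube_diam d)
      (hA i) (hae s) (by rw [hν]; exact ha)
    rw [hν] at h
    refine h.trans ?_
    calc _ ≤ B + s.card * (B + ENNReal.ofReal (√d) * ENNReal.ofReal (2 * √a)) +
          ENNReal.ofReal (√d) * ENNReal.ofReal (2 * √a) := by
          gcongr
          exact hB i
      _ = _ := by push_cast; ring

lemma MP_scale (n : ℝ) (hn : 0 < n) (j : ℕ) (hj : 0 < j) :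
    MP d ((j : ℝ) ^ d * n) ≤ (j : ℝ) ^ d * ((j : ℝ)⁻¹ * MP d n + √d * (2 * √n)) := by
  have hj' : (0 : ℝ) < j := by exact_mod_cast hj
  have h1 := smul_fin d n
  have e : ENNReal.ofReal ((j : ℝ) ^ d * n) • unifCube d =
      ∑ v : Fin d → Fin j, (ENNReal.ofReal n • unifCube d).map (cell d j v) := by
    conv_lhs => rw [unif_split d j hj]
    rw [Finset.smul_sum]
    refine Finset.sum_congr rfl fun v _ => ?_
    rw [← Measure.map_smul, smul_smul]
    congr 2
    rw [ENNReal.ofReal_mul (by positivity), ENNReal.ofReal_pow hj'.le, ENNReal.ofReal_natCast,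
      mul_right_comm, ← mul_pow, ENNReal.mul_inv_cancel (by exact_mod_cast hj.ne') (by simp)]
    simp
  rw [MP_eq d _ (by positivity), MP_eq d n hn.le, e]
  have h := PP_sum_le d Finset.univ
    (fun v : Fin d → Fin j => (ENNReal.ofReal n • unifCube d).map (cell d j v))
    (fun v => inferInstance) n hn
    (fun v => by
      rw [Measure.map_apply (cell_meas d j v) MeasurableSet.univ, Set.preimage_univ,
        smul_mass d n hn.le])
    (fun v => by
      refine (ae_map_iff (p := fun x => x ∈ unitCube d) (cell_meas d j v).aemeasurable (unitCube_meas d)).2 ?_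
      filter_upwards [Measure.ae_smul_measure (unif_ae d) (ENNReal.ofReal n)] with x hx
      exact cell_mem d j hj v hx)
    (ENNReal.ofReal ((j : ℝ)⁻¹) * PP (ENNReal.ofReal n • unifCube d) Lm)
    (fun v => PP_map_le _ (cell_meas d j v) (cell_edist d j v) ENNReal.ofReal_ne_top
      (by simpa using hj.ne'))
  refine (ENNReal.toReal_mono ?_ h).trans (le_of_eq ?_)
  · simp [ENNReal.mul_eq_top, PP_fin]
  · rw [ENNReal.toReal_mul, ENNReal.toReal_add (by simp [ENNReal.mul_eq_top, PP_fin])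
      (by simp [ENNReal.mul_eq_top]), ENNReal.toReal_mul, ← ENNReal.ofReal_mul (by positivity),
      ENNReal.toReal_ofReal (by positivity), ENNReal.toReal_ofReal (by positivity)]
    simp

end cube


section concl

variable (d : ℕ) (M : ℝ → ℝ) (S : ℝ)

/-- normalised function -/
noncomputable def nf (x : ℝ) : ℝ := M x / x ^ (1 - 1 / (d : ℝ))

/-- exponent -/
noncomputable def gam : ℝ := 1 / 2 - 1 / (d : ℝ)

lemma gam_pos (hd : 3 ≤ d) : 0 < gam d := by
  have h : (3 : ℝ) ≤ d := by exact_mod_cast hd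
  unfold gam
  have : 1 / (d : ℝ) ≤ 1 / 3 := one_div_le_one_div_of_le (by norm_num) h
  linarith

lemma pp_pos (hd : 3 ≤ d) : 0 < 1 - 1 / (d : ℝ) := by
  have := gam_pos d hd
  unfold gam at this
  linarith

lemma sqrt_div (n : ℝ) (hn : 0 < n) : √n / n ^ (1 - 1 / (d : ℝ)) = n ^ (- gam d) := by
  rw [Real.sqrt_eq_rpow, ← Real.rpow_sub hn]
  congr 1; unfold gam; ring

lemma pow_pp (hd : 3 ≤ d) (j : ℝ) (hj : 0 < j) : (j ^ d) ^ (1 - 1 / (d : ℝ)) = j ^ d * j⁻¹ := by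
  have h : (d : ℝ) ≠ 0 := by positivity
  rw [← Real.rpow_natCast, ← Real.rpow_mul hj.le, ← Real.rpow_neg_one, ← Real.rpow_add hj]
  congr 1
  field_simp
  ring

variable (hd : 3 ≤ d) (hS : 0 ≤ S) (h0 : ∀ x, 0 ≤ x → 0 ≤ M x) (h1 : ∀ x, 0 ≤ x → M x ≤ S * x)
  (h2 : ∀ a b, 0 < a → 0 ≤ b → M (a + b) ≤ M a + M b + S * (2 * √a))
  (h3 : ∀ n, 0 < n → ∀ j : ℕ, 0 < j → M ((j : ℝ) ^ d * n) ≤ (j : ℝ) ^ d * ((j : ℝ)⁻¹ * M n + S * (2 * √n)))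

include hd h3 in
lemma nf_scale (n : ℝ) (hn : 0 < n) (j : ℕ) (hj : 0 < j) :
    nf d M ((j : ℝ) ^ d * n) ≤ nf d M n + 2 * S * j * n ^ (- gam d) := by
  have hj' : (0 : ℝ) < j := by exact_mod_cast hj
  unfold nf
  rw [Real.mul_rpow (by positivity) hn.le, pow_pp d hd _ hj', ← sqrt_div d n hn]
  have hp : 0 < n ^ (1 - 1 / (d : ℝ)) := by positivity
  rw [div_le_iff₀ (by positivity)]
  refine (h3 n hn j hj).trans (le_of_eq ?_)
  field_simp

/-- the constant K -/
noncomputable def KK : ℝ := 4 * S / (1 - ((2 : ℝ) ^ d) ^ (- gam d))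

include hd in
lemma q_lt : ((2 : ℝ) ^ d) ^ (- gam d) < 1 := by
  apply Real.rpow_lt_one_of_one_lt_of_neg
  · exact one_lt_pow₀ (by norm_num) (by omega)
  · linarith [gam_pos d hd]

include hd hS in
lemma KK_nonneg : 0 ≤ KK d S := by
  have := q_lt d hd
  unfold KK
  apply div_nonneg <;> linarith

include hd h3 in
lemma nf_pow2 (n : ℝ) (hn : 0 < n) (k : ℕ) :
    nf d M (((2 : ℝ) ^ k) ^ d * n) + KK d S * (((2 : ℝ) ^ k) ^ d * n) ^ (- gam d) ≤
      nf d M n + KK d S * n ^ (- gam d) := by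
  induction k with
  | zero => simp
  | succ k ih =>
    refine le_trans ?_ ih
    set m := ((2 : ℝ) ^ k) ^ d * n with hm
    have hm0 : 0 < m := by positivity
    have e : ((2 : ℝ) ^ (k + 1)) ^ d * n = ((2 : ℕ) : ℝ) ^ d * m := by
      rw [hm, pow_succ, mul_pow]; push_cast; ring
    rw [e]
    have h := nf_scale d M S hd h3 m hm0 2 (by norm_num)
    rw [Real.mul_rpow (by positivity) hm0.le]
    push_cast at h ⊢
    have hq := q_lt d hd
    have hK : KK d S * (1 - ((2 : ℝ) ^ d) ^ (- gam d)) = 4 * S := by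
      unfold KK
      rw [div_mul_cancel₀]
      linarith
    set q := ((2 : ℝ) ^ d) ^ (- gam d)
    set t := m ^ (- gam d)
    have : KK d S * (1 - q) * t = 4 * S * t := by rw [hK]
    nlinarith

include hd h3 hS in
lemma nf_pow2' (n : ℝ) (hn : 0 < n) (k : ℕ) :
    nf d M (((2 : ℝ) ^ k) ^ d * n) ≤ nf d M n + KK d S * n ^ (- gam d) := by
  have := nf_pow2 d M S hd h3 n hn k
  have h : 0 ≤ KK d S * (((2 : ℝ) ^ k) ^ d * n) ^ (- gam d) := by
    have := KK_nonneg d S hd hS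
    positivity
  linarith

include hd h3 hS in
lemma nf_comb (n : ℝ) (hn : 1 ≤ n) (k j : ℕ) (hj : 0 < j) :
    nf d M (((2 : ℝ) ^ k * j) ^ d * n) ≤ nf d M n + (2 * S * j + KK d S) * n ^ (- gam d) := by
  have hj1 : (1 : ℝ) ≤ j := by exact_mod_cast hj
  have hn0 : 0 < n := by linarith
  have a := nf_pow2' d M S hd hS h3 ((j : ℝ) ^ d * n) (by positivity) k
  have b := nf_scale d M S hd h3 n hn0 j hj
  have c : ((j : ℝ) ^ d * n) ^ (- gam d) ≤ n ^ (- gam d) := by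
    apply Real.rpow_le_rpow_of_nonpos hn0
    · have : 1 ≤ (j : ℝ) ^ d := one_le_pow₀ hj1
      nlinarith
    · linarith [gam_pos d hd]
  have := mul_le_mul_of_nonneg_left c (KK_nonneg d S hd hS)
  rw [mul_pow, mul_assoc]
  linarith

include h0 in
lemma nf_nonneg (n : ℝ) (hn : 0 ≤ n) : 0 ≤ nf d M n := by
  have := h0 n hn
  unfold nf; positivity

include h1 in
lemma nf_le (n : ℝ) (hn : 0 < n) : nf d M n ≤ S * n ^ (1 / (d : ℝ)) := by
  unfold nf
  rw [div_le_iff₀ (by positivity), mul_assoc, ← Real.rpow_add hn]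
  simpa using h1 n hn.le

lemma exists_pow2 (T r : ℝ) (hr : 0 < r) (h : r ≤ T) : ∃ k : ℕ, 2 ^ k * r ≤ T ∧ T < 2 ^ (k + 1) * r := by
  obtain ⟨k, hk⟩ := exists_nat_pow_near (x := T / r) (y := (2 : ℝ)) ((one_le_div hr).2 h) (by norm_num)
  exact ⟨k, (le_div_iff₀ hr).1 hk.1, (div_lt_iff₀ hr).1 hk.2⟩

include hd h1 h3 hS in
lemma nf_bdd : ∃ B, 0 ≤ B ∧ ∀ n, 0 < n → nf d M n ≤ B := by
  have hK := KK_nonneg d S hd hS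
  refine ⟨S * 2 + KK d S, by positivity, fun n hn => ?_⟩
  have hd0 : (d : ℝ) ≠ 0 := by positivity
  have hp : ∀ m : ℝ, 0 < m → m ≤ 2 ^ d → nf d M m ≤ S * 2 := by
    intro m hm hm2
    refine (nf_le d M S h1 m hm).trans (mul_le_mul_of_nonneg_left ?_ hS)
    have := Real.rpow_le_rpow hm.le hm2 (z := 1 / (d : ℝ)) (by positivity)
    refine this.trans (le_of_eq ?_)
    rw [one_div, Real.pow_rpow_inv_natCast (by norm_num) (by omega)]
  rcases le_or_gt n 1 with h | h
  · have := hp n hn (h.trans (one_le_pow₀ (by norm_num)))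
    linarith
  · obtain ⟨k, hk⟩ := exists_nat_pow_near (x := n) (y := (2 : ℝ) ^ d) h.le
      (one_lt_pow₀ (by norm_num) (by omega))
    have e : n = ((2 : ℝ) ^ k) ^ d * (n / ((2 : ℝ) ^ d) ^ k) := by
      rw [← pow_mul, ← pow_mul, mul_comm k d]; field_simp
    have hm1 : 1 ≤ n / ((2 : ℝ) ^ d) ^ k := (one_le_div (by positivity)).2 hk.1
    have hm2 : n / ((2 : ℝ) ^ d) ^ k ≤ 2 ^ d := by
      rw [div_le_iff₀ (by positivity), ← pow_succ']; exact hk.2.le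
    rw [e]
    have a := nf_pow2' d M S hd hS h3 _ (by linarith : 0 < n / ((2 : ℝ) ^ d) ^ k) k
    have b := hp _ (by linarith) hm2
    have c : (n / ((2 : ℝ) ^ d) ^ k) ^ (- gam d) ≤ 1 :=
      Real.rpow_le_one_of_one_le_of_nonpos hm1 (by linarith [gam_pos d hd])
    have := mul_le_mul_of_nonneg_left c hK
    linarith

include hd hS h0 h2 in
lemma nf_add (B : ℝ) (hB : ∀ n, 0 < n → nf d M n ≤ B) (hB0 : 0 ≤ B) (a b : ℝ) (ha : 0 < a) (hb : 0 ≤ b) :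
    nf d M (a + b) ≤ nf d M a + B * (b / (a + b)) ^ (1 - 1 / (d : ℝ)) +
      2 * S * (a + b) ^ (- gam d) := by
  have hpp := pp_pos d hd
  rcases hb.eq_or_lt with rfl | hb
  · simp only [add_zero]
    have : 0 ≤ B * (0 / a) ^ (1 - 1 / (d : ℝ)) := by positivity
    have : 0 ≤ 2 * S * a ^ (- gam d) := by positivity
    linarith
  have hN : 0 < a + b := by positivity
  rw [← sqrt_div d _ hN, Real.div_rpow hb.le hN.le]
  have e : ∀ x, 0 < x → M x = nf d M x * x ^ (1 - 1 / (d : ℝ)) := by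
    intro x hx; unfold nf; field_simp
  have key := h2 b a hb ha.le
  rw [add_comm b a, e a ha, e b hb] at key
  have hP : 0 < (a + b) ^ (1 - 1 / (d : ℝ)) := by positivity
  have k1 : a ^ (1 - 1 / (d : ℝ)) ≤ (a + b) ^ (1 - 1 / (d : ℝ)) :=
    Real.rpow_le_rpow ha.le (by linarith) hpp.le
  have k2 := mul_le_mul_of_nonneg_left k1 (nf_nonneg d M h0 a ha.le)
  have k3 := mul_le_mul_of_nonneg_right (hB b hb) (by positivity : 0 ≤ b ^ (1 - 1 / (d : ℝ)))
  have k4 : S * (2 * √b) ≤ S * (2 * √(a + b)) := by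
    have : √b ≤ √(a + b) := Real.sqrt_le_sqrt (by linarith)
    gcongr
  have : nf d M (a + b) = M (a + b) / (a + b) ^ (1 - 1 / (d : ℝ)) := rfl
  rw [this, div_le_iff₀ hP]
  have e2 : (nf d M a + B * (b ^ (1 - 1 / (d : ℝ)) / (a + b) ^ (1 - 1 / (d : ℝ))) +
      2 * S * (√(a + b) / (a + b) ^ (1 - 1 / (d : ℝ)))) * (a + b) ^ (1 - 1 / (d : ℝ)) =
      nf d M a * (a + b) ^ (1 - 1 / (d : ℝ)) + B * b ^ (1 - 1 / (d : ℝ)) + 2 * S * √(a + b) := by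
    field_simp
  rw [e2]
  linarith

include hd hS h0 h2 h3 in
lemma nf_main (B : ℝ) (hB : ∀ n, 0 < n → nf d M n ≤ B) (hB0 : 0 ≤ B) (r : ℕ) (hr : 0 < r)
    (n N : ℝ) (hn : 1 ≤ n) (hN : (r : ℝ) ^ d * n ≤ N) :
    nf d M N ≤ nf d M n + B * (d / r) ^ (1 - 1 / (d : ℝ)) +
      (2 * S * (2 * r) + KK d S + 2 * S) * n ^ (- gam d) := by
  have hpp := pp_pos d hd
  have hr' : (0 : ℝ) < r := by exact_mod_cast hr
  have hn0 : 0 < n := by linarith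
  have hd0 : d ≠ 0 := by omega
  set T := (N / n) ^ ((d : ℝ)⁻¹) with hT
  have hNn : (r : ℝ) ^ d ≤ N / n := (le_div_iff₀ hn0).2 hN
  have hN0 : 0 < N := lt_of_lt_of_le (by positivity) hN
  have hTd : T ^ d = N / n := Real.rpow_inv_natCast_pow (by positivity) hd0
  have hT0 : 0 ≤ T := by positivity
  have hrT : (r : ℝ) ≤ T := by
    by_contra hc
    push Not at hc
    have := pow_lt_pow_left₀ hc hT0 hd0
    linarith
  obtain ⟨k, hk1, hk2⟩ := exists_pow2 T r hr' hrT
  set j := ⌊T / 2 ^ k⌋₊ with hjdef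
  have hk0 : (0 : ℝ) < 2 ^ k := by positivity
  have hjr : r ≤ j := Nat.le_floor ((le_div_iff₀ hk0).2 (by linarith))
  have hj1 : (j : ℝ) * 2 ^ k ≤ T := (le_div_iff₀ hk0).1 (Nat.floor_le (by positivity))
  have hj2 : T < (j + 1 : ℝ) * 2 ^ k := (div_lt_iff₀ hk0).1 (Nat.lt_floor_add_one _)
  have hj0 : 0 < j := by omega
  have hj0' : (0 : ℝ) < j := by exact_mod_cast hj0
  have hj3 : (j : ℝ) ≤ 2 * r := by
    have : (j : ℝ) * 2 ^ k ≤ (2 * r) * 2 ^ k := by rw [pow_succ] at hk2; linarith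
    exact le_of_mul_le_mul_right this hk0
  set a := ((2 : ℝ) ^ k * j) ^ d * n with ha
  have ha0 : 0 < a := by positivity
  have haN : a ≤ N := by
    rw [ha, ← le_div_iff₀ hn0, ← hTd]
    exact pow_le_pow_left₀ (by positivity) (by linarith) d
  have hfr : (N - a) / N ≤ d / r := by
    have h5 : N ≤ ((2 : ℝ) ^ k * (j + 1)) ^ d * n := by
      rw [← div_le_iff₀ hn0, ← hTd]
      exact pow_le_pow_left₀ hT0 (by linarith) d
    have h6 : ((j : ℝ) / (j + 1)) ^ d * N ≤ a := by
      refine (mul_le_mul_of_nonneg_left h5 (by positivity)).trans (le_of_eq ?_)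
      rw [ha, div_pow, mul_pow, mul_pow]
      field_simp
    have h7 : 1 - d / (j + 1 : ℝ) ≤ ((j : ℝ) / (j + 1)) ^ d := by
      have := one_add_mul_le_pow (a := -(1 / (j + 1 : ℝ))) (by
        have : 1 / (j + 1 : ℝ) ≤ 1 := by rw [div_le_one (by positivity)]; linarith
        linarith) d
      have e : 1 + -(1 / (j + 1 : ℝ)) = (j : ℝ) / (j + 1) := by field_simp; ring
      rw [e] at this
      refine le_trans (le_of_eq ?_) this
      ring
    have h8 : (d : ℝ) / (j + 1) ≤ d / r := by
      have : (r : ℝ) ≤ j := by exact_mod_cast hjr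
      gcongr; linarith
    rw [div_le_iff₀ hN0]
    have h9 := mul_le_mul_of_nonneg_right (h7) hN0.le
    have h10 := mul_le_mul_of_nonneg_right (h8) hN0.le
    linarith
  have A := nf_add d M S hd hS h0 h2 B hB hB0 a (N - a) ha0 (by linarith)
  rw [add_sub_cancel] at A
  have C := nf_comb d M S hd hS h3 n hn k j hj0
  have hK := KK_nonneg d S hd hS
  have t1 : ((N - a) / N) ^ (1 - 1 / (d : ℝ)) ≤ (d / r) ^ (1 - 1 / (d : ℝ)) :=
    Real.rpow_le_rpow (div_nonneg (by linarith) hN0.le) hfr hpp.le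
  have t2 : N ^ (- gam d) ≤ n ^ (- gam d) := by
    apply Real.rpow_le_rpow_of_nonpos hn0
    · have : (1 : ℝ) ≤ (r : ℝ) ^ d := one_le_pow₀ (by exact_mod_cast hr)
      nlinarith
    · linarith [gam_pos d hd]
  have t3 : 0 ≤ n ^ (- gam d) := by positivity
  have t4 := mul_le_mul_of_nonneg_left t1 hB0
  have t5 := mul_le_mul_of_nonneg_left t2 (by positivity : 0 ≤ 2 * S)
  have t6 : 2 * S * j * n ^ (- gam d) ≤ 2 * S * (2 * r) * n ^ (- gam d) := by gcongr
  linarith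

include hd hS h0 h1 h2 h3 in
lemma nf_tendsto : ∃ β : ℝ, Tendsto (nf d M) atTop (nhds β) := by
  obtain ⟨B, hB0, hB⟩ := nf_bdd d M S hd hS h1 h3
  have hpp := pp_pos d hd
  have hub : ∀ᶠ x in atTop, nf d M x ≤ B := by
    filter_upwards [eventually_gt_atTop 0] with x hx using hB x hx
  have hlb : ∀ᶠ x in atTop, 0 ≤ nf d M x := by
    filter_upwards [eventually_gt_atTop 0] with x hx using nf_nonneg d M h0 x hx.le
  have bu : IsBoundedUnder (· ≤ ·) atTop (nf d M) := ⟨B, by simpa using hub⟩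
  have bl : IsBoundedUnder (· ≥ ·) atTop (nf d M) := ⟨0, by simpa using hlb⟩
  refine ⟨liminf (nf d M) atTop, ?_⟩
  set l := liminf (nf d M) atTop with hl
  refine tendsto_order.2 ⟨fun c hc => eventually_lt_of_lt_liminf hc bl, fun c hc => ?_⟩
  set ε := (c - l) / 4 with hε
  have hε0 : 0 < ε := by rw [hε]; linarith
  have hr : Tendsto (fun r : ℕ => B * ((d : ℝ) / r) ^ (1 - 1 / (d : ℝ))) atTop (nhds 0) := by
    have := (tendsto_const_div_atTop_nhds_zero_nat (d : ℝ)).rpow_const (p := 1 - 1 / (d : ℝ))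
      (Or.inr hpp.le)
    rw [Real.zero_rpow hpp.ne'] at this
    simpa using this.const_mul B
  obtain ⟨r, hr1, hr0⟩ := ((hr.eventually_lt_const hε0).and (eventually_gt_atTop 0)).exists
  have hn : Tendsto (fun n : ℝ => (2 * S * (2 * r) + KK d S + 2 * S) * n ^ (- gam d)) atTop (nhds 0) := by
    simpa using (tendsto_rpow_neg_atTop (gam_pos d hd)).const_mul (2 * S * (2 * r) + KK d S + 2 * S)
  have hfreq : ∃ᶠ n in atTop, nf d M n < l + ε :=
    frequently_lt_of_liminf_lt bu.isCoboundedUnder_ge (by linarith)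
  obtain ⟨n, hn1, hn2, hn3⟩ := (hfreq.and_eventually
    ((hn.eventually_lt_const hε0).and (eventually_ge_atTop 1))).exists
  filter_upwards [eventually_ge_atTop ((r : ℝ) ^ d * n)] with N hN
  have := nf_main d M S hd hS h0 h2 h3 B hB hB0 r hr0 n N hn3 hN
  linarith

end concl


end MBM
/-- For `d ≥ 3`, the Poissonized mean minimum bipartite matching length satisfies
`M(N)/N^{1−1/d} → β_MBM(d)` as `N → ∞`, i.e. `M(N) ∼ β_MBM(d) N^{1−1/d}`. -/
theorem MP_tendsto
    (d : ℕ) (hd : 3 ≤ d) :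
    ∃ β : ℝ, Tendsto (fun N : ℝ => MP d N / N ^ (1 - 1 / (d : ℝ))) atTop (nhds β) := by
  exact MBM.nf_tendsto d (MP d) (√d) hd (Real.sqrt_nonneg _) (MBM.MP_nonneg d) (MBM.MP_le d)
    (MBM.MP_add d) (MBM.MP_scale d)
end
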